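/- arXiv:1401.1657 — 3 statements merged into one kernel-verified Lean document; each statement's English description precedes it below -/
import Mathlib

section
/- Let D ⊆ ℂⁿ be a bounded balanced pseudoconvex domain and let f : 𝔻 → D be a weak m-extremal with respect to distinct points λ₁,…,λ_m ∈ 𝔻. For λ_{m+1} ∈ 𝔻 distinct from λ₁,…,λ_m, the map g(λ) := m_{λ_{m+1}}(λ)·f(λ) is a weak (m+1)-extremal with respect to λ₁,…,λ_{m+1}. -/
open Complex Metric Set

noncomputable section

/-- The open unit disc in `ℂ`. -/
def 𝔻 : Set ℂ := Metric.ball 0 1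

/-- `B` is a Blaschke product of degree `m` on the unit disc: a unimodular constant
times a product of `m` Möbius factors. -/
def IsBlaschke (m : ℕ) (B : ℂ → ℂ) : Prop :=
  ∃ (ω : ℂ) (a : Fin m → ℂ), ‖ω‖ = 1 ∧ (∀ j, a j ∈ 𝔻) ∧
    ∀ z ∈ 𝔻, B z = ω * ∏ j, (a j - z) / (1 - (starRingEnd ℂ) (a j) * z)

variable {E : Type*} [NormedAddCommGroup E] [NormedSpace ℂ E]

/-- The interpolation data `lam j ↦ f (lam j)` is extremally solvable (through `f`):
no map holomorphic on a neighbourhood of the closed unit disc with values in `D`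
interpolates `f` at the points `lam j`. -/
def ExtSolv (D : Set E) {m : ℕ} (lam : Fin m → ℂ) (f : ℂ → E) : Prop :=
  ¬ ∃ (U : Set ℂ) (g : ℂ → E), IsOpen U ∧ Metric.closedBall (0 : ℂ) 1 ⊆ U ∧
      DifferentiableOn ℂ g U ∧ (∀ z ∈ U, g z ∈ D) ∧ ∀ j, g (lam j) = f (lam j)

/-- `f : 𝔻 → D` is a weak `m`-extremal with respect to the distinct points `lam`. -/
def IsWeakExtremal (D : Set E) {m : ℕ} (lam : Fin m → ℂ) (f : ℂ → E) : Prop :=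
  DifferentiableOn ℂ f 𝔻 ∧ (∀ z ∈ 𝔻, f z ∈ D) ∧ ExtSolv D lam f

/-- `f : 𝔻 → D` is `m`-extremal: for all choices of `m` distinct points of `𝔻` the
corresponding interpolation data is extremally solvable. -/
def IsMExtremal (D : Set E) (m : ℕ) (f : ℂ → E) : Prop :=
  DifferentiableOn ℂ f 𝔻 ∧ (∀ z ∈ 𝔻, f z ∈ D) ∧
    ∀ lam : Fin m → ℂ, Function.Injective lam → (∀ j, lam j ∈ 𝔻) → ExtSolv D lam f

/-- The Minkowski functional of a set `D`. -/
def mink (D : Set E) (z : E) : ℝ := sInf {t : ℝ | 0 < t ∧ ((t : ℂ))⁻¹ • z ∈ D}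

/-- `φ` is a holomorphic automorphism of `D`. -/
def IsAutomorphismOf (D : Set E) (φ : E → E) : Prop :=
  DifferentiableOn ℂ φ D ∧ Set.MapsTo φ D D ∧
    ∃ ψ : E → E, DifferentiableOn ℂ ψ D ∧ Set.MapsTo ψ D D ∧
      (∀ z ∈ D, ψ (φ z) = z) ∧ (∀ z ∈ D, φ (ψ z) = z)

/-- The group of holomorphic automorphisms of `D` acts transitively. -/
def Homogeneous (D : Set E) : Prop :=
  ∀ z ∈ D, ∀ w ∈ D, ∃ φ : E → E, IsAutomorphismOf D φ ∧ φ z = w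

/-- `f` is an `m`-complex geodesic of `D`: there is `F ∈ 𝒪(D, 𝔻)` such that `F ∘ f` is a
non-constant Blaschke product of degree at most `m - 1`. -/
def IsComplexGeodesicOfOrder (D : Set E) (m : ℕ) (f : ℂ → E) : Prop :=
  DifferentiableOn ℂ f 𝔻 ∧ (∀ z ∈ 𝔻, f z ∈ D) ∧
    ∃ F : E → ℂ, DifferentiableOn ℂ F D ∧ (∀ z ∈ D, F z ∈ 𝔻) ∧
      ∃ k : ℕ, 1 ≤ k ∧ k ≤ m - 1 ∧ ∃ B : ℂ → ℂ, IsBlaschke k B ∧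
        ∀ z ∈ 𝔻, F (f z) = B z

/-- The sub-mean-value property on circles, for a real function on a subset of `ℂ`. -/
def SubmeanOn (u : ℂ → ℝ) (S : Set ℂ) : Prop :=
  ∀ (c : ℂ) (r : ℝ), 0 < r → Metric.closedBall c r ⊆ S →
    u c ≤ (2 * Real.pi)⁻¹ * ∫ θ in (0:ℝ)..(2 * Real.pi), u (c + r * Complex.exp (θ * Complex.I))

/-- `u` is plurisubharmonic on `D`: upper semicontinuous and submean on every complex line. -/
def PlurisubharmonicOn (u : E → ℝ) (D : Set E) : Prop :=
  UpperSemicontinuousOn u D ∧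
    ∀ (z v : E), SubmeanOn (fun w : ℂ => u (z + w • v)) {w : ℂ | z + w • v ∈ D}

/-- Hartogs pseudoconvexity: `- log dist(·, ∂D)` is plurisubharmonic on `D`. -/
def IsPseudoconvex (D : Set E) : Prop :=
  PlurisubharmonicOn (fun z => - Real.log (Metric.infDist z Dᶜ)) D


open Filter Topology Asymptotics Real in
lemma avg_ge {E : Type*} [NormedAddCommGroup E] [NormedSpace ℂ E] [CompleteSpace E]
    (v : E → ℝ) (hv : ContDiff ℝ 1 v)
    (φ : ℂ → E) (U : Set ℂ) (hU : IsOpen U) (z0 : ℂ) (hz0 : z0 ∈ U)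
    (hφ : DifferentiableOn ℂ φ U) (r0 : ℝ) (hr0 : 0 < r0)
    (hsub : ∀ r, 0 < r → r < r0 →
      v (φ z0) ≤ circleAverage (fun w => v (φ z0 + (w - z0) • deriv φ z0)) z0 r)
    (η : ℝ) (hη : 0 < η) :
    ∃ r1 > 0, ∀ r, 0 < r → r < r1 →
      v (φ z0) - η * r ^ 2 ≤ circleAverage (fun w => v (φ w)) z0 r := by
  set a := deriv φ z0 with ha
  set p := φ z0 with hp
  have hUn : U ∈ 𝓝 z0 := hU.mem_nhds hz0
  have hφd : DifferentiableAt ℂ φ z0 := hφ.differentiableAt hUn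
  set ψ : ℂ → E := fun z => φ z - (p + (z - z0) • a) with hψ
  have hds : DifferentiableAt ℂ (dslope φ z0) z0 :=
    ((Complex.differentiableOn_dslope hUn).2 hφ).differentiableAt hUn
  have hψO : ψ =O[𝓝 z0] fun z => ‖z - z0‖ ^ 2 := by
    have h1 := hds.isBigO_sub
    have h2 : ψ = fun z => (z - z0) • (dslope φ z0 z - dslope φ z0 z0) := by
      funext z
      simp only [hψ, smul_sub, sub_smul_dslope, dslope_same]
      abel
    rw [h2]
    have h3 := (isBigO_refl (fun z : ℂ => z - z0) (𝓝 z0)).smul h1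
    refine h3.trans (IsBigO.of_norm_right ?_)
    refine IsBigO.of_bound 1 (Eventually.of_forall fun z => ?_)
    simp [pow_two]
  have hstrict := (hv.contDiffAt (x := p)).hasStrictFDerivAt (by norm_num)
  set L := fderiv ℝ v p with hL
  have hlin : Continuous fun z : ℂ => p + (z - z0) • a := by fun_prop
  have htend : Tendsto (fun z => (φ z, p + (z - z0) • a)) (𝓝 z0) (𝓝 (p, p)) := by
    rw [nhds_prod_eq]
    refine Tendsto.prodMk hφd.continuousAt ?_
    have := hlin.tendsto z0
    simpa using this
  have ho := (hstrict.isLittleO.comp_tendsto htend).trans_isBigO hψO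
  have hb := ho.bound hη
  obtain ⟨s, hs, hsb⟩ := Metric.eventually_nhds_iff.1 (hb.and hUn)
  refine ⟨min s r0, lt_min hs hr0, fun r hr hr1 => ?_⟩
  have hrs : r < s := hr1.trans_le (min_le_left _ _)
  have hrr0 : r < r0 := hr1.trans_le (min_le_right _ _)
  have hcb : closedBall z0 r ⊆ U := fun z hz => (hsb (lt_of_le_of_lt hz hrs)).2
  have hsphere : sphere z0 |r| ⊆ closedBall z0 r := by
    rw [abs_of_pos hr]; exact sphere_subset_closedBall
  have hφc : ContinuousOn φ (sphere z0 |r|) := hφ.continuousOn.mono (hsphere.trans hcb)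
  have i1 : CircleIntegrable (fun w => v (φ w)) z0 r :=
    ContinuousOn.circleIntegrable' (hv.continuous.comp_continuousOn hφc)
  have i2 : CircleIntegrable (fun w => v (p + (w - z0) • a)) z0 r :=
    ContinuousOn.circleIntegrable' (hv.continuous.comp hlin).continuousOn
  have hψc : ContinuousOn ψ (sphere z0 |r|) := hφc.sub hlin.continuousOn
  have i3' : CircleIntegrable ψ z0 r := ContinuousOn.circleIntegrable' hψc
  have i3 : CircleIntegrable (fun w => L (ψ w)) z0 r :=
    ContinuousOn.circleIntegrable' (L.continuous.comp_continuousOn hψc)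
  have i4 : CircleIntegrable (fun _ : ℂ => η * r ^ 2) z0 r := by simp
  have hψavg : circleAverage ψ z0 r = 0 := by
    have hd : DifferentiableOn ℂ ψ (closedBall z0 |r|) := by
      rw [abs_of_pos hr]
      refine (hφ.mono hcb).sub ?_
      fun_prop
    have := (DifferentiableOn.diffContOnCl_ball (U := closedBall z0 |r|) hd subset_rfl).circleAverage
    rw [this]; simp [hψ, hp]
  have hLavg : circleAverage (fun w => L (ψ w)) z0 r = 0 := by
    have := L.circleAverage_comp_comm i3'
    rw [hψavg, map_zero] at this
    exact this
  have hmono : circleAverage (fun w => (v (p + (w - z0) • a) + L (ψ w)) - η * r ^ 2) z0 r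
      ≤ circleAverage (fun w => v (φ w)) z0 r := by
    refine circleAverage_mono ((i2.add i3).sub i4) i1 fun x hx => ?_
    rw [abs_of_pos hr] at hx
    have hx' : dist x z0 = r := hx
    have := (hsb (y := x) (by rw [hx']; exact hrs)).1
    simp only [Function.comp, Real.norm_eq_abs] at this
    rw [← dist_eq_norm x z0, hx', abs_of_nonneg (by positivity : (0:ℝ) ≤ r ^ 2)] at this
    have := (abs_le.1 this).1
    simp only [hψ]
    linarith
  have i23 : CircleIntegrable (fun w => v (p + (w - z0) • a) + L (ψ w)) z0 r := i2.add i3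
  rw [circleAverage_fun_sub i23 i4, circleAverage_fun_add i2 i3, hLavg,
    circleAverage_const] at hmono
  have := hsub r hr hrr0
  linarith

open Filter Topology Asymptotics Real in
lemma max_C1 {E : Type*} [NormedAddCommGroup E] [NormedSpace ℂ E] [CompleteSpace E]
    (v : E → ℝ) (hv : ContDiff ℝ 1 v)
    (φ : ℂ → E) (U : Set ℂ) (hU : IsOpen U) (hUc : closedBall (0 : ℂ) 1 ⊆ U)
    (hφ : DifferentiableOn ℂ φ U)
    (hsub : ∀ z0 ∈ ball (0 : ℂ) 1, ∃ r0 > 0, ∀ r, 0 < r → r < r0 →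
      v (φ z0) ≤ circleAverage (fun w => v (φ z0 + (w - z0) • deriv φ z0)) z0 r)
    (M : ℝ) (hM : ∀ z, ‖z‖ = 1 → v (φ z) ≤ M) :
    ∀ z ∈ closedBall (0 : ℂ) 1, v (φ z) ≤ M := by
  intro z1 hz1
  by_contra hcon
  push Not at hcon
  obtain ⟨η, hη⟩ : ∃ η, η = (v (φ z1) - M) / 2 := ⟨_, rfl⟩
  have hη0 : 0 < η := by rw [hη]; linarith
  have hvc : ContinuousOn (fun z => v (φ z)) (closedBall 0 1) :=
    hv.continuous.comp_continuousOn (hφ.continuousOn.mono hUc)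
  have hWc : ContinuousOn (fun z => v (φ z) + η * ‖z‖ ^ 2) (closedBall (0 : ℂ) 1) := by
    refine hvc.add ?_
    fun_prop
  obtain ⟨z0, hz0, hmax⟩ := (isCompact_closedBall (0 : ℂ) 1).exists_isMaxOn ⟨z1, hz1⟩ hWc
  have hmax' : ∀ z ∈ closedBall (0 : ℂ) 1,
      v (φ z) + η * ‖z‖ ^ 2 ≤ v (φ z0) + η * ‖z0‖ ^ 2 := fun z hz => hmax hz
  have hz0b : z0 ∈ ball (0 : ℂ) 1 := by
    rw [mem_ball_zero_iff]
    have h0 : ‖z0‖ ≤ 1 := by simpa using hz0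
    refine lt_of_le_of_ne h0 fun h => ?_
    have h1 := hmax' z1 hz1
    have h2 := hM z0 h
    rw [h] at h1
    have h3 : 0 ≤ η * ‖z1‖ ^ 2 := by positivity
    linarith
  obtain ⟨r0, hr0, hr0'⟩ := hsub z0 hz0b
  obtain ⟨r1, hr1, hr1'⟩ := avg_ge v hv φ U hU z0 (hUc hz0) hφ r0 hr0 hr0' (η / 2) (by linarith)
  obtain ⟨s, hs, hsb⟩ := Metric.nhds_basis_closedBall.mem_iff.1 (isOpen_ball.mem_nhds hz0b)
  obtain ⟨r, hr⟩ : ∃ r, r = min (r1 / 2) s := ⟨_, rfl⟩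
  have hrp : 0 < r := by rw [hr]; positivity
  have hrr1 : r < r1 := by
    have := min_le_left (r1 / 2) s
    rw [hr]; linarith
  have hrs : r ≤ s := by rw [hr]; exact min_le_right _ _
  have key := hr1' r hrp hrr1
  have hsp : sphere z0 |r| ⊆ closedBall (0 : ℂ) 1 := by
    rw [abs_of_pos hrp]
    exact (sphere_subset_closedBall.trans (closedBall_subset_closedBall hrs)).trans
      (hsb.trans ball_subset_closedBall)
  set q : ℂ → ℂ := fun w => (starRingEnd ℂ) z0 * (w - z0) with hq
  have hqd : Differentiable ℂ q := by simp only [hq]; fun_prop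
  have i1 : CircleIntegrable (fun w => v (φ w)) z0 r :=
    ContinuousOn.circleIntegrable' (hvc.mono hsp)
  have iq : CircleIntegrable q z0 r :=
    ContinuousOn.circleIntegrable' hqd.continuous.continuousOn
  have i2 : CircleIntegrable (fun w => (2 * η) • Complex.reCLM (q w)) z0 r := by
    refine ContinuousOn.circleIntegrable' (Continuous.continuousOn ?_)
    have := hqd.continuous
    fun_prop
  have hqavg : circleAverage (fun w => (2 * η) • Complex.reCLM (q w)) z0 r = 0 := by
    rw [circleAverage_fun_smul]
    have h1 := Complex.reCLM.circleAverage_comp_comm iq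
    have h2 := (hqd.diffContOnCl (s := ball z0 |r|)).circleAverage
    rw [h2] at h1
    have h3 : circleAverage (fun w => Complex.reCLM (q w)) z0 r = 0 := by
      refine h1.trans ?_
      simp [hq]
    rw [h3, smul_zero]
  have hle : circleAverage (fun w => v (φ w) + (2 * η) • Complex.reCLM (q w)) z0 r
      ≤ v (φ z0) - η * r ^ 2 := by
    refine circleAverage_mono_on_of_le_circle (i1.add i2) fun x hx => ?_
    have h1 := hmax' x (hsp hx)
    rw [abs_of_pos hrp] at hx
    have hx' : ‖x - z0‖ = r := by simpa [dist_eq_norm] using hx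
    have h2 : ‖x‖ ^ 2 = ‖z0‖ ^ 2 + r ^ 2 + 2 * (q x).re := by
      rw [← hx', ← Complex.normSq_eq_norm_sq, ← Complex.normSq_eq_norm_sq,
        ← Complex.normSq_eq_norm_sq]
      simp [hq, Complex.normSq_apply]
      ring
    rw [h2] at h1
    simp only [smul_eq_mul, Complex.reCLM_apply]
    linarith
  rw [circleAverage_fun_add i1 i2, hqavg] at hle
  have : 0 < η * r ^ 2 := by positivity
  linarith

open Filter Topology MeasureTheory Real Convolution in
lemma smooth_submean {n : ℕ} (u : (Fin n → ℂ) → ℝ) (hu : Continuous u)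
    (χ : ContDiffBump (0 : Fin n → ℂ)) (x a : Fin n → ℂ) (z0 : ℂ) (r : ℝ)
    (h : ∀ t ∈ ball (0 : Fin n → ℂ) χ.rOut,
      u (x - t) ≤ circleAverage (fun w => u (x - t + (w - z0) • a)) z0 r) :
    (χ.normed volume ⋆[ContinuousLinearMap.lsmul ℝ ℝ, volume] u) x ≤
      circleAverage (fun w => (χ.normed volume ⋆[ContinuousLinearMap.lsmul ℝ ℝ, volume] u)
        (x + (w - z0) • a)) z0 r := by
  have hχc : Continuous (χ.normed (volume : Measure (Fin n → ℂ))) := χ.continuous_normed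
  have hcs : HasCompactSupport (χ.normed (volume : Measure (Fin n → ℂ))) :=
    χ.hasCompactSupport_normed
  simp only [circleAverage_def, convolution_def, ContinuousLinearMap.lsmul_apply, smul_eq_mul] at h ⊢
  have hcm : Continuous (fun θ : ℝ => circleMap z0 r θ) := continuous_circleMap z0 r
  have hF : Continuous (Function.uncurry fun (θ : ℝ) (t : Fin n → ℂ) =>
      χ.normed volume t * u (x + (circleMap z0 r θ - z0) • a - t)) := by
    simp only [Function.uncurry_def]
    fun_prop
  have hpi : (0 : ℝ) ≤ 2 * π := by positivity
  have hint : Integrable (Function.uncurry fun (θ : ℝ) (t : Fin n → ℂ) =>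
      χ.normed volume t * u (x + (circleMap z0 r θ - z0) • a - t))
      ((volume.restrict (Set.uIoc 0 (2 * π))).prod volume) := by
    have h1 : IntegrableOn (Function.uncurry fun (θ : ℝ) (t : Fin n → ℂ) =>
        χ.normed volume t * u (x + (circleMap z0 r θ - z0) • a - t))
        (Set.uIoc 0 (2 * π) ×ˢ tsupport (χ.normed (volume : Measure (Fin n → ℂ))))
        ((volume : Measure ℝ).prod (volume : Measure (Fin n → ℂ))) := by
      have h2 : IsCompact (Set.Icc 0 (2 * π) ×ˢ
          tsupport (χ.normed (volume : Measure (Fin n → ℂ)))) := isCompact_Icc.prod hcs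
      refine (hF.continuousOn.integrableOn_compact h2).mono_set ?_
      refine Set.prod_mono ?_ subset_rfl
      rw [Set.uIoc_of_le hpi]
      exact Set.Ioc_subset_Icc_self
    have h3 : IntegrableOn (Function.uncurry fun (θ : ℝ) (t : Fin n → ℂ) =>
        χ.normed volume t * u (x + (circleMap z0 r θ - z0) • a - t))
        (Set.uIoc 0 (2 * π) ×ˢ Set.univ)
        ((volume : Measure ℝ).prod (volume : Measure (Fin n → ℂ))) := by
      refine h1.of_forall_sdiff_eq_zero (measurableSet_uIoc.prod MeasurableSet.univ) ?_
      rintro ⟨θ, t⟩ ⟨⟨h4, _⟩, h5⟩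
      have h6 : t ∉ tsupport (χ.normed (volume : Measure (Fin n → ℂ))) := fun h7 => h5 ⟨h4, h7⟩
      simp only [Function.uncurry_apply_pair, image_eq_zero_of_notMem_tsupport h6, zero_mul]
    rw [IntegrableOn, ← Measure.prod_restrict, Measure.restrict_univ] at h3
    exact h3
  rw [intervalIntegral_integral_swap hint, ← integral_const_mul]
  refine integral_mono ?_ ?_ ?_
  · refine Continuous.integrable_of_hasCompactSupport (by fun_prop) ?_
    exact hcs.mul_right
  · have h1 := hint.integral_prod_right
    simp only [Function.uncurry_apply_pair] at h1
    simp only [intervalIntegral.integral_of_le hpi]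
    rw [Set.uIoc_of_le hpi] at h1
    exact h1.const_mul _
  · intro t
    by_cases ht : t ∈ ball (0 : Fin n → ℂ) χ.rOut
    · have h1 := mul_le_mul_of_nonneg_left (h t ht) (χ.nonneg_normed (μ := volume) t)
      simp only
      rw [intervalIntegral.integral_const_mul, mul_left_comm]
      refine h1.trans (le_of_eq ?_)
      simp only [sub_add_eq_add_sub]
    · have h0 : χ.normed volume t = 0 := by
        rw [← Function.notMem_support, χ.support_normed_eq]
        exact ht
      simp [h0]

open Filter Topology MeasureTheory Real Convolution in
lemma disc_principle {n : ℕ} (D : Set (Fin n → ℂ)) (hDo : IsOpen D) (hne : Dᶜ.Nonempty)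
    (hpsc : IsPseudoconvex D) (φ : ℂ → Fin n → ℂ) (U : Set ℂ) (hU : IsOpen U)
    (hUc : closedBall (0 : ℂ) 1 ⊆ U) (hφ : DifferentiableOn ℂ φ U)
    (hφD : ∀ z ∈ closedBall (0 : ℂ) 1, φ z ∈ D) (δ : ℝ) (hδ : 0 < δ)
    (hb : ∀ z, ‖z‖ = 1 → δ ≤ infDist (φ z) Dᶜ) :
    ∀ z ∈ closedBall (0 : ℂ) 1, δ ≤ infDist (φ z) Dᶜ := by
  have hφc : ContinuousOn φ (closedBall 0 1) := hφ.continuousOn.mono hUc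
  have hpos : ∀ x ∈ D, 0 < infDist x Dᶜ := fun x hx =>
    (hDo.isClosed_compl.notMem_iff_infDist_pos hne).1 (fun h => h hx)
  have hinD : ∀ x, 0 < infDist x Dᶜ → x ∈ D := fun x hx => by
    by_contra h
    rw [infDist_zero_of_mem (show x ∈ Dᶜ from h)] at hx
    exact lt_irrefl _ hx
  have hKc : IsCompact (φ '' closedBall 0 1) := (isCompact_closedBall 0 1).image_of_continuousOn hφc
  obtain ⟨d, hd, hdK⟩ : ∃ d > 0, ∀ z ∈ closedBall (0 : ℂ) 1, d ≤ infDist (φ z) Dᶜ := by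
    obtain ⟨z0, hz0, hmin⟩ := (isCompact_closedBall (0 : ℂ) 1).exists_isMinOn
      ⟨0, by simp⟩ ((continuous_infDist_pt Dᶜ).comp_continuousOn hφc)
    exact ⟨_, hpos _ (hφD z0 hz0), fun z hz => hmin hz⟩
  set u : (Fin n → ℂ) → ℝ := fun x => - Real.log (max (infDist x Dᶜ) (d / 2)) with hu
  have hucont : Continuous u := by
    refine Continuous.neg (Continuous.log ((continuous_infDist_pt Dᶜ).max continuous_const) ?_)
    intro x
    have : 0 < max (infDist x Dᶜ) (d / 2) := lt_max_of_lt_right (by linarith)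
    exact this.ne'
  have hueq : ∀ x, d / 2 ≤ infDist x Dᶜ → u x = - Real.log (infDist x Dᶜ) := fun x hx => by
    simp only [hu, max_eq_left hx]
  have main : ∀ η > 0, ∀ z ∈ closedBall (0 : ℂ) 1, u (φ z) ≤ - Real.log δ + 2 * η := by
    intro η hη
    have hunif := hKc.uniformContinuousAt_of_continuousAt u
      (fun a _ => hucont.continuousAt) (Metric.dist_mem_uniformity hη)
    obtain ⟨ε0, hε0, hε0'⟩ := Metric.mem_uniformity_dist.1 hunif
    obtain ⟨ε, hε⟩ : ∃ ε, ε = min ε0 (d / 4) := ⟨_, rfl⟩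
    have hεp : 0 < ε := by rw [hε]; positivity
    have hε1 : ε ≤ ε0 := by rw [hε]; exact min_le_left _ _
    have hε2 : ε ≤ d / 4 := by rw [hε]; exact min_le_right _ _
    let χ : ContDiffBump (0 : Fin n → ℂ) := ⟨ε / 2, ε, by positivity, by linarith⟩
    have hχr : χ.rOut = ε := rfl
    set v : (Fin n → ℂ) → ℝ :=
      χ.normed volume ⋆[ContinuousLinearMap.lsmul ℝ ℝ, volume] u with hv
    have hvC : ContDiff ℝ 1 v := by
      have := HasCompactSupport.contDiff_convolution_left (n := 1) (𝕜 := ℝ)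
        (ContinuousLinearMap.lsmul ℝ ℝ)
        (χ.hasCompactSupport_normed (μ := volume)) χ.contDiff_normed
        (hucont.locallyIntegrable (μ := volume))
      exact_mod_cast this
    have hclose : ∀ z ∈ closedBall (0 : ℂ) 1, |v (φ z) - u (φ z)| ≤ η := by
      intro z hz
      have := χ.dist_normed_convolution_le (μ := volume) (x₀ := φ z) (g := u) (ε := η)
        hucont.aestronglyMeasurable ?_
      · rwa [Real.dist_eq] at this
      · intro y hy
        rw [hχr, mem_ball'] at hy
        have h1 := hε0' (hy.trans_le hε1) (Set.mem_image_of_mem φ hz)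
        rw [dist_comm]
        exact le_of_lt h1
    have hmax := max_C1 v hvC φ U hU hUc hφ ?_ (- Real.log δ + η) ?_
    · intro z hz
      have h1 := hmax z hz
      have h2 := (abs_le.1 (hclose z hz)).1
      linarith
    · intro z0 hz0
      have hz0' := ball_subset_closedBall hz0
      set a := deriv φ z0 with ha
      refine ⟨(d / 4) / (‖a‖ + 1), by positivity, fun r hr hr1 => ?_⟩
      rw [lt_div_iff₀ (by positivity)] at hr1
      refine smooth_submean u hucont χ (φ z0) a z0 r fun t ht => ?_
      rw [hχr, mem_ball_zero_iff] at ht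
      have hnear : ∀ w ∈ closedBall z0 r,
          d / 2 ≤ infDist (φ z0 - t + (w - z0) • a) Dᶜ := by
        intro w hw
        have h1 := hdK z0 hz0'
        have h2 := infDist_le_infDist_add_dist (s := Dᶜ) (x := φ z0)
          (y := φ z0 - t + (w - z0) • a)
        have h3 : dist (φ z0) (φ z0 - t + (w - z0) • a) ≤ ‖t‖ + r * ‖a‖ := by
          rw [dist_eq_norm, show φ z0 - (φ z0 - t + (w - z0) • a) = t - (w - z0) • a by abel]
          refine (norm_sub_le _ _).trans ?_
          rw [norm_smul]
          have : ‖w - z0‖ ≤ r := by simpa [dist_eq_norm] using hw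
          gcongr
        nlinarith
      have hs := hpsc.2 (φ z0 - t - z0 • a) a z0 r hr (fun w hw => by
        have := hinD _ (lt_of_lt_of_le (by linarith) (hnear w hw))
        rw [sub_smul] at this
        rw [Set.mem_ofPred_eq]
        convert this using 1
        abel)
      have e1 : φ z0 - t - z0 • a + z0 • a = φ z0 - t := by abel
      have h0 := hueq _ (hnear z0 (mem_closedBall_self hr.le))
      simp only [sub_self, zero_smul, add_zero] at h0
      simp only [e1] at hs
      rw [h0]
      refine hs.trans (le_of_eq ?_)
      have hcongr : circleAverage (fun w => u (φ z0 - t + (w - z0) • a)) z0 r =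
          circleAverage (fun w => - Real.log (infDist (φ z0 - t - z0 • a + w • a) Dᶜ)) z0 r := by
        refine circleAverage_congr_sphere fun w hw => ?_
        rw [abs_of_pos hr] at hw
        rw [hueq _ (hnear w (sphere_subset_closedBall hw)), sub_smul]
        congr 3
        abel
      rw [hcongr, circleAverage_def]
      rfl
    · intro z hz
      have hz' : z ∈ closedBall (0 : ℂ) 1 := by simp [hz]
      have h2 := (abs_le.1 (hclose z hz')).2
      have h3 : u (φ z) ≤ - Real.log δ := by
        rw [hueq _ (by linarith [hdK z hz'])]
        exact neg_le_neg (Real.log_le_log hδ (hb z hz))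
      linarith
  intro z hz
  have h1 : u (φ z) ≤ - Real.log δ := by
    refine le_of_forall_pos_le_add fun η hη => ?_
    have := main (η / 2) (by linarith) z hz
    linarith
  have hd' := hdK z hz
  rw [hueq _ (by linarith), neg_le_neg_iff] at h1
  exact (Real.log_le_log_iff hδ (by linarith)).1 h1

lemma disc_in {n : ℕ} (D : Set (Fin n → ℂ)) (hDo : IsOpen D) (hDne : D.Nonempty)
    (hbal : Balanced ℂ D)
    (hpsc : IsPseudoconvex D) (φ : ℂ → Fin n → ℂ) (U : Set ℂ) (hU : IsOpen U)
    (hUc : closedBall (0 : ℂ) 1 ⊆ U) (hφ : DifferentiableOn ℂ φ U)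
    (hb : ∀ z, ‖z‖ = 1 → φ z ∈ D) :
    ∀ z ∈ closedBall (0 : ℂ) 1, φ z ∈ D := by
  rcases Set.eq_empty_or_nonempty Dᶜ with hemp | hne
  · intro z _
    rw [Set.compl_empty_iff.1 hemp]; trivial
  have h0D : (0 : Fin n → ℂ) ∈ D := by
    obtain ⟨x, hx⟩ := hDne
    have := hbal.smul_mem (a := (0 : ℂ)) (by simp) hx
    simpa using this
  have hφc : ContinuousOn φ (closedBall 0 1) := hφ.continuousOn.mono hUc
  have hpos : ∀ x ∈ D, 0 < infDist x Dᶜ := fun x hx =>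
    (hDo.isClosed_compl.notMem_iff_infDist_pos hne).1 (fun h => h hx)
  obtain ⟨N, hN⟩ := ((isCompact_closedBall (0 : ℂ) 1).image_of_continuousOn hφc).isBounded.exists_norm_le
  have hN' : ∀ z ∈ closedBall (0 : ℂ) 1, ‖φ z‖ ≤ N := fun z hz => hN _ ⟨z, hz, rfl⟩
  have hN0 : 0 ≤ N := (norm_nonneg _).trans (hN' 0 (by simp))
  have hcont2 : ContinuousOn (fun p : ℝ × ℂ => infDist ((p.1 : ℂ) • φ p.2) Dᶜ)
      (Set.Icc (0 : ℝ) 1 ×ˢ sphere (0 : ℂ) 1) := by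
    refine (continuous_infDist_pt Dᶜ).comp_continuousOn 
      (ContinuousOn.smul (f := fun p : ℝ × ℂ => (p.1 : ℂ)) (g := fun p : ℝ × ℂ => φ p.2) ?_ ?_)
    · exact (Complex.continuous_ofReal.comp continuous_fst).continuousOn
    refine hφc.comp continuousOn_snd fun p hp => sphere_subset_closedBall hp.2
  obtain ⟨δ, hδ, hδb⟩ : ∃ δ > 0, ∀ t ∈ Set.Icc (0 : ℝ) 1, ∀ z, ‖z‖ = 1 →
      δ ≤ infDist ((t : ℂ) • φ z) Dᶜ := by
    obtain ⟨p, hp, hmin⟩ := (isCompact_Icc.prod (isCompact_sphere (0 : ℂ) 1)).exists_isMinOn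
      ⟨(0, 1), by simp⟩ hcont2
    refine ⟨_, hpos ((p.1 : ℂ) • φ p.2) ?_, fun t ht z hz => ?_⟩
    · refine hbal.smul_mem ?_ (hb _ (by simpa using hp.2))
      rw [Complex.norm_real, Real.norm_eq_abs, abs_of_nonneg hp.1.1]
      exact hp.1.2
    · have htz : (t, z) ∈ Set.Icc (0 : ℝ) 1 ×ˢ sphere (0 : ℂ) 1 := ⟨ht, by simpa using hz⟩
      exact isMinOn_iff.1 hmin (t, z) htz
  obtain ⟨k, hk⟩ := exists_nat_gt (N / δ)
  have hk0 : (0 : ℝ) < k := lt_of_le_of_lt (by positivity) hk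
  rw [div_lt_iff₀ hδ] at hk
  have step : ∀ j : ℕ, j ≤ k → ∀ z ∈ closedBall (0 : ℂ) 1, (((j : ℝ) / k : ℝ) : ℂ) • φ z ∈ D := by
    intro j
    induction j with
    | zero => intro _ z _; simpa using h0D
    | succ j ih =>
      intro hj z hz
      have h1 := ih (by omega)
      have hjk : ((j : ℝ) / k) ∈ Set.Icc (0 : ℝ) 1 := by
        refine ⟨by positivity, ?_⟩
        rw [div_le_one hk0]
        exact_mod_cast (by omega : j ≤ k)
      have h2 := disc_principle D hDo hne hpsc (fun z => (((j : ℝ) / k : ℝ) : ℂ) • φ z) U hU hUc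
        (hφ.const_smul (((j : ℝ) / k : ℝ) : ℂ)) h1 δ hδ (hδb _ hjk) z hz
      refine ball_infDist_compl_subset (x := (((j : ℝ) / k : ℝ) : ℂ) • φ z) ?_
      rw [mem_ball, dist_eq_norm, ← sub_smul, ← Complex.ofReal_sub, norm_smul, Complex.norm_real]
      have h3 : (((j + 1 : ℕ) : ℝ) / k - (j : ℝ) / k) = 1 / k := by
        push_cast; ring
      rw [h3, Real.norm_eq_abs, abs_of_pos (by positivity)]
      refine lt_of_lt_of_le ?_ h2
      rw [one_div, inv_mul_lt_iff₀ hk0]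
      exact (hN' z hz).trans_lt hk
  intro z hz
  have := step k le_rfl z hz
  rwa [div_self hk0.ne', Complex.ofReal_one, one_smul] at this

lemma mob_aux (α z : ℂ) : ‖1 - (starRingEnd ℂ) α * z‖ ^ 2 - ‖α - z‖ ^ 2
    = (1 - ‖α‖ ^ 2) * (1 - ‖z‖ ^ 2) := by
  simp only [← Complex.normSq_eq_norm_sq]
  simp [Complex.normSq_apply]
  ring

lemma mob_den_ne {α z : ℂ} (hα : ‖α‖ < 1) (hz : ‖z‖ ≤ 1) : 1 - (starRingEnd ℂ) α * z ≠ 0 := by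
  intro h
  have h1 : (starRingEnd ℂ) α * z = 1 := (sub_eq_zero.1 h).symm
  have h2 : ‖α‖ * ‖z‖ = 1 := by
    have := congrArg norm h1
    simpa using this
  nlinarith [norm_nonneg α, norm_nonneg z]

lemma mob_le {α z : ℂ} (hα : ‖α‖ < 1) (hz : ‖z‖ ≤ 1) :
    ‖(α - z) / (1 - (starRingEnd ℂ) α * z)‖ ≤ 1 := by
  rw [norm_div, div_le_one (norm_pos_iff.2 (mob_den_ne hα hz))]
  refine le_of_sq_le_sq ?_ (norm_nonneg _)
  have h1 := mob_aux α z
  have h2 : 0 ≤ (1 - ‖α‖ ^ 2) * (1 - ‖z‖ ^ 2) :=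
    mul_nonneg (by nlinarith [norm_nonneg α]) (by nlinarith [norm_nonneg z])
  linarith

lemma mob_eq {α z : ℂ} (hα : ‖α‖ < 1) (hz : ‖z‖ = 1) :
    ‖(α - z) / (1 - (starRingEnd ℂ) α * z)‖ = 1 := by
  have hne := norm_pos_iff.2 (mob_den_ne hα hz.le)
  rw [norm_div, div_eq_one_iff_eq hne.ne']
  have h1 := mob_aux α z
  rw [hz] at h1
  refine (sq_eq_sq₀ (norm_nonneg _) (norm_nonneg _)).1 ?_
  linarith

theorem stmt4 {n : ℕ} (D : Set (Fin n → ℂ)) (hDo : IsOpen D) (hDc : IsConnected D)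
    (hbd : Bornology.IsBounded D) (hbal : Balanced ℂ D) (hpsc : IsPseudoconvex D)
    (m : ℕ) (hm : 2 ≤ m)
    (lam : Fin (m + 1) → ℂ) (hinj : Function.Injective lam) (hmem : ∀ j, lam j ∈ 𝔻)
    (f : ℂ → Fin n → ℂ)
    (hf : IsWeakExtremal D (fun j : Fin m => lam j.castSucc) f) :
    IsWeakExtremal D lam
      (fun z => ((lam (Fin.last m) - z) / (1 - (starRingEnd ℂ) (lam (Fin.last m)) * z)) • f z) := by
  obtain ⟨hfd, hfD, hfe⟩ := hf
  obtain ⟨α, hα⟩ : ∃ α, α = lam (Fin.last m) := ⟨_, rfl⟩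
  rw [← hα]
  have hnorm : ∀ z ∈ 𝔻, ‖z‖ < 1 := fun z hz => by simpa [𝔻] using hz
  have hα1 : ‖α‖ < 1 := hnorm _ (hα ▸ hmem _)
  refine ⟨?_, ?_, ?_⟩
  · refine DifferentiableOn.smul (𝕜' := ℂ) ?_ hfd
    refine DifferentiableOn.div (by fun_prop) (by fun_prop) fun z hz => ?_
    exact mob_den_ne hα1 (hnorm z hz).le
  · intro z hz
    exact hbal.smul_mem (mob_le hα1 (hnorm z hz).le) (hfD z hz)
  · rintro ⟨U, h, hU, hUc, hhd, hhD, hhl⟩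
    apply hfe
    have hαU : α ∈ U := hUc (by simpa using hα1.le)
    have hh0 : h α = 0 := by
      have := hhl (Fin.last m)
      simpa [← hα] using this
    set φ : ℂ → Fin n → ℂ := fun z => (-(1 - (starRingEnd ℂ) α * z)) • dslope h α z with hφ
    have hφd : DifferentiableOn ℂ φ U := by
      refine DifferentiableOn.smul (c := fun z : ℂ => -(1 - (starRingEnd ℂ) α * z)) (by fun_prop) ?_
      exact (Complex.differentiableOn_dslope (hU.mem_nhds hαU)).2 hhd
    have hmul : ∀ z, ‖z‖ ≤ 1 → ((α - z) / (1 - (starRingEnd ℂ) α * z)) • φ z = h z := by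
      intro z hz
      have hne := mob_den_ne hα1 hz
      have h1 := sub_smul_dslope h α z
      rw [hh0, sub_zero] at h1
      rw [← h1]
      simp only [hφ, smul_smul]
      congr 1
      rw [div_mul_eq_mul_div, div_eq_iff hne]
      ring
    have hφb : ∀ z, ‖z‖ = 1 → φ z ∈ D := by
      intro z hz
      have h1 := hmul z hz.le
      have h2 := mob_eq hα1 hz
      set c := (α - z) / (1 - (starRingEnd ℂ) α * z) with hc
      have hc0 : c ≠ 0 := by
        intro h0
        rw [h0, norm_zero] at h2
        exact zero_ne_one h2
      have h3 : φ z = c⁻¹ • h z := by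
        rw [← h1, smul_smul, inv_mul_cancel₀ hc0, one_smul]
      rw [h3]
      exact hbal.smul_mem (by rw [norm_inv, h2, inv_one]) (hhD z (hUc (by simp [hz])))
    have hφD := disc_in D hDo hDc.nonempty hbal hpsc φ U hU hUc hφd hφb
    refine ⟨U ∩ φ ⁻¹' D, φ, hφd.continuousOn.isOpen_inter_preimage hU hDo,
      fun z hz => ⟨hUc hz, hφD z hz⟩, hφd.mono Set.inter_subset_left, fun z hz => hz.2, ?_⟩
    intro j
    have hz := hnorm _ (hmem j.castSucc)
    have h1 := hmul _ hz.le
    have h2 := hhl j.castSucc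
    rw [h2] at h1
    have hc0 : (α - lam j.castSucc) / (1 - (starRingEnd ℂ) α * lam j.castSucc) ≠ 0 := by
      refine div_ne_zero (sub_ne_zero.2 ?_) (mob_den_ne hα1 hz.le)
      rw [hα]
      intro h3
      exact absurd (hinj h3) (Fin.castSucc_lt_last j).ne'
    exact smul_right_injective _ hc0 h1

end
end

section
/- Let k ≥ 3, a₁ ∈ (0,1), and f(λ) = (a₁λᵏ, √(1−a₁²)λ^{k+1}) ∈ 𝔹₂. There is no holomorphic F : 𝔹₂ → 𝔻 with F(0)=0 such that F ∘ f is a non-constant Blaschke product of degree at most k+1. Consequently f, which is (k+2)-extremal in 𝔹₂, is not a (k+2)-complex geodesic. -/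
open Complex Metric Set

noncomputable section

variable {E : Type*} [NormedAddCommGroup E] [NormedSpace ℂ E]

/-- The disc `λ ↦ (a₁λᵏ, √(1-a₁²)λ^{k+1})` in `ℂ²`. -/
def f10 (k : ℕ) (a₁ : ℝ) : ℂ → EuclideanSpace ℂ (Fin 2) := fun z =>
  EuclideanSpace.single (0 : Fin 2) ((a₁ : ℂ) * z ^ k) +
    EuclideanSpace.single (1 : Fin 2) (((Real.sqrt (1 - a₁ ^ 2) : ℝ) : ℂ) * z ^ (k + 1))

lemma f10_zero_coord (k : ℕ) (a₁ : ℝ) (z : ℂ) : f10 k a₁ z 0 = (a₁ : ℂ) * z ^ k := by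
  simp [f10]

lemma f10_one_coord (k : ℕ) (a₁ : ℝ) (z : ℂ) :
    f10 k a₁ z 1 = ((Real.sqrt (1 - a₁ ^ 2) : ℝ) : ℂ) * z ^ (k + 1) := by
  simp [f10]

lemma f10_normSq (k : ℕ) (a₁ : ℝ) (ha : a₁ ∈ Set.Ioo (0 : ℝ) 1) (z : ℂ) :
    ‖f10 k a₁ z‖ ^ 2 = (a₁ ^ 2 + (1 - a₁ ^ 2) * ‖z‖ ^ 2) * (‖z‖ ^ k) ^ 2 := by
  have h : 0 ≤ 1 - a₁ ^ 2 := by nlinarith [ha.1, ha.2]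
  rw [EuclideanSpace.norm_sq_eq, Fin.sum_univ_two, f10_zero_coord, f10_one_coord]
  simp only [norm_mul, norm_pow, Complex.norm_real, Real.norm_eq_abs, mul_pow, sq_abs,
    Real.sq_sqrt h]
  ring

lemma f10_norm_le (k : ℕ) (a₁ : ℝ) (ha : a₁ ∈ Set.Ioo (0 : ℝ) 1) (z : ℂ) (hz : ‖z‖ ≤ 1) :
    ‖f10 k a₁ z‖ ≤ ‖z‖ ^ k := by
  have h : 0 ≤ 1 - a₁ ^ 2 := by nlinarith [ha.1, ha.2]
  refine (sq_le_sq₀ (norm_nonneg _) (by positivity)).1 ?_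
  rw [f10_normSq k a₁ ha]
  have : ‖z‖ ^ 2 ≤ 1 := pow_le_one₀ (norm_nonneg _) hz
  have h2 : a₁ ^ 2 + (1 - a₁ ^ 2) * ‖z‖ ^ 2 ≤ 1 := by nlinarith
  nlinarith [sq_nonneg (‖z‖ ^ k)]

lemma f10_norm_circle (k : ℕ) (a₁ : ℝ) (ha : a₁ ∈ Set.Ioo (0 : ℝ) 1) (z : ℂ) (hz : ‖z‖ = 1) :
    ‖f10 k a₁ z‖ = 1 := by
  have := f10_normSq k a₁ ha z
  rw [hz] at this
  have h2 : ‖f10 k a₁ z‖ ^ 2 = 1 := by rw [this]; simp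
  exact (pow_eq_one_iff_of_nonneg (norm_nonneg _) two_ne_zero).1 h2

lemma f10_mem (k : ℕ) (hk : 3 ≤ k) (a₁ : ℝ) (ha : a₁ ∈ Set.Ioo (0 : ℝ) 1) (z : ℂ)
    (hz : z ∈ 𝔻) : f10 k a₁ z ∈ Metric.ball (0 : EuclideanSpace ℂ (Fin 2)) 1 := by
  have hz' : ‖z‖ < 1 := by simpa [𝔻] using hz
  rw [mem_ball_zero_iff]
  exact (f10_norm_le k a₁ ha z hz'.le).trans_lt (pow_lt_one₀ (norm_nonneg _) hz' (by omega))

lemma f10_diff (k : ℕ) (a₁ : ℝ) : Differentiable ℂ (f10 k a₁) := by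
  rw [differentiable_euclidean]
  intro i
  fin_cases i
  · simp only [Fin.zero_eta, f10_zero_coord]; fun_prop
  · simp only [Fin.mk_one, f10_one_coord]; fun_prop

/-- Division by a product of linear factors at distinct zeros. -/
lemma exists_factor {U : Set ℂ} (hU : IsOpen U) (S : Finset ℂ) :
    ∀ ψ : ℂ → ℂ, DifferentiableOn ℂ ψ U → (∀ s ∈ S, s ∈ U ∧ ψ s = 0) →
      ∃ h : ℂ → ℂ, DifferentiableOn ℂ h U ∧ ∀ z ∈ U, ψ z = (∏ s ∈ S, (z - s)) * h z := by
  induction S using Finset.induction_on with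
  | empty => intro ψ hψ _; exact ⟨ψ, hψ, by simp⟩
  | insert a S haS ih =>
    intro ψ hψ hS
    obtain ⟨haU, ha0⟩ := hS a (Finset.mem_insert_self _ _)
    have key : ∀ z, ψ z = (z - a) * dslope ψ a z := by
      intro z
      have := sub_smul_dslope ψ a z
      simp only [smul_eq_mul, ha0, sub_zero] at this
      exact this.symm
    obtain ⟨h, hh, hh'⟩ := ih (dslope ψ a)
      ((Complex.differentiableOn_dslope (hU.mem_nhds haU)).2 hψ) (by
        intro s hs
        obtain ⟨h1, h2⟩ := hS s (Finset.mem_insert_of_mem hs)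
        refine ⟨h1, ?_⟩
        have hne : s - a ≠ 0 := sub_ne_zero.2 (by rintro rfl; exact haS hs)
        have := key s
        rw [h2] at this
        exact (mul_eq_zero.1 this.symm).resolve_left hne)
    refine ⟨h, hh, fun z hz => ?_⟩
    rw [key z, hh' z hz, Finset.prod_insert haS, mul_assoc]

/-- A function with positive real part on the circle has nonzero value at the origin. -/
lemma re_pos_center {Φ : ℂ → ℂ} (hΦ : DifferentiableOn ℂ Φ (Metric.ball 0 1))
    (hc : ContinuousOn Φ (Metric.closedBall 0 1))
    (hpos : ∀ z : ℂ, ‖z‖ = 1 → 0 < (Φ z).re) : Φ 0 ≠ 0 := by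
  intro h0
  have hcs : IsCompact (Metric.sphere (0 : ℂ) 1) := isCompact_sphere _ _
  obtain ⟨w, hw, hmin⟩ := hcs.exists_isMinOn (f := fun z => (Φ z).re)
    ⟨1, by simp⟩ (Complex.continuous_re.comp_continuousOn (hc.mono sphere_subset_closedBall))
  have hwpos := hpos w (by simpa using hw)
  have hd : DiffContOnCl ℂ (fun z => Complex.exp (-Φ z)) (Metric.ball 0 1) := by
    refine ⟨hΦ.neg.cexp, ?_⟩
    rw [closure_ball _ one_ne_zero]
    exact Complex.continuous_exp.comp_continuousOn hc.neg
  have := Complex.norm_le_of_forall_mem_frontier_norm_le (C := Real.exp (-(Φ w).re))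
    Metric.isBounded_ball hd (by
      intro z hz
      rw [frontier_ball _ one_ne_zero] at hz
      rw [Complex.norm_exp]
      have : (Φ w).re ≤ (Φ z).re := hmin hz
      simpa using this) (z := 0) (subset_closure (by simp))
  simp [h0] at this
  linarith

lemma f10_extSolv (k : ℕ) (a₁ : ℝ) (ha : a₁ ∈ Set.Ioo (0 : ℝ) 1)
    (lam : Fin (k + 2) → ℂ) (hinj : Function.Injective lam) (hlam : ∀ j, lam j ∈ 𝔻) :
    ExtSolv (Metric.ball (0 : EuclideanSpace ℂ (Fin 2)) 1) lam (f10 k a₁) := by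
  rintro ⟨U, g, hU, hsub, hg, hgD, hint⟩
  set b : ℝ := Real.sqrt (1 - a₁ ^ 2) with hb
  have hlam' : ∀ j, ‖lam j‖ < 1 := fun j => by simpa [𝔻] using hlam j
  set f := f10 k a₁ with hf
  let ψ : ℂ → ℂ := fun z => (a₁ : ℂ) * z * (f z 0 - g z 0) + (b : ℂ) * (f z 1 - g z 1)
  have hfd : Differentiable ℂ f := f10_diff k a₁
  have hfi : ∀ i, DifferentiableOn ℂ (fun z => f z i) U := fun i =>
    ((differentiable_euclidean.1 hfd) i).differentiableOn
  have hgi : ∀ i, DifferentiableOn ℂ (fun z => g z i) U := fun i =>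
    (differentiableOn_euclidean.1 hg) i
  have hψ : DifferentiableOn ℂ ψ U := by
    have h1 := hfi 0; have h2 := hfi 1; have h3 := hgi 0; have h4 := hgi 1
    exact ((differentiableOn_id.const_mul _).mul (h1.sub h3)).add ((h2.sub h4).const_mul _)
  obtain ⟨h, hh, hfac⟩ := exists_factor hU (Finset.univ.image lam) ψ hψ (by
    intro s hs
    obtain ⟨j, -, rfl⟩ := Finset.mem_image.1 hs
    refine ⟨hsub (by simpa using (hlam' j).le), ?_⟩
    simp [ψ, hint j])
  have hfac' : ∀ z ∈ U, ψ z = (∏ j, (z - lam j)) * h z := by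
    intro z hz
    rw [hfac z hz, Finset.prod_image (fun x _ y _ hxy => hinj hxy)]
  let qs : ℂ → ℂ := fun z => ∏ j, (1 - (starRingEnd ℂ) (lam j) * z)
  have hqs : ∀ z : ℂ, ‖z‖ ≤ 1 → qs z ≠ 0 := by
    intro z hz
    refine Finset.prod_ne_zero_iff.2 fun j _ h0 => ?_
    have h1 : (starRingEnd ℂ) (lam j) * z = 1 := (sub_eq_zero.1 h0).symm
    have h2 : ‖lam j‖ * ‖z‖ = 1 := by simpa using congrArg norm h1
    nlinarith [hlam' j, norm_nonneg z, norm_nonneg (lam j)]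
  have hqsd : Differentiable ℂ qs := by
    intro z; simp only [qs]; fun_prop
  have hΦ : DifferentiableOn ℂ (fun z => z * h z / qs z) (Metric.closedBall 0 1) :=
    ((differentiableOn_id.mul (hh.mono hsub))).div hqsd.differentiableOn
      (fun z hz => hqs z (by simpa using hz))
  refine re_pos_center (hΦ.mono ball_subset_closedBall) hΦ.continuousOn ?_ (by simp)
  intro z hz
  have hzU : z ∈ U := hsub (by simp [hz])
  have hz0 : z ≠ 0 := by rintro rfl; simp at hz
  have hzz : z * (starRingEnd ℂ) z = 1 := by
    rw [Complex.mul_conj, Complex.normSq_eq_norm_sq, hz]; simp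
  set q : ℂ := ∏ j, (z - lam j) with hq
  have hq0 : q ≠ 0 := by
    refine Finset.prod_ne_zero_iff.2 fun j _ h0 => ?_
    have := hlam' j
    rw [← sub_eq_zero.1 h0, hz] at this
    exact lt_irrefl _ this
  have hqq : qs z = z ^ (k + 2) * (starRingEnd ℂ) q := by
    have : ∀ j, 1 - (starRingEnd ℂ) (lam j) * z = z * (starRingEnd ℂ) (z - lam j) := by
      intro j; rw [map_sub, mul_sub, hzz]; ring
    simp only [qs, this, Finset.prod_mul_distrib, hq, map_prod]
    simp
  have hin : ψ z * (starRingEnd ℂ) z ^ (k + 1) = inner ℂ (f z) (f z - g z) := by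
    rw [PiLp.inner_apply, Fin.sum_univ_two]
    simp only [PiLp.sub_apply, RCLike.inner_apply, ψ]
    have e0 : f z 0 = (a₁ : ℂ) * z ^ k := f10_zero_coord _ _ _
    have e1 : f z 1 = (b : ℂ) * z ^ (k + 1) := f10_one_coord _ _ _
    have e2 : (starRingEnd ℂ) (f z 0) = (a₁ : ℂ) * (starRingEnd ℂ) z ^ k := by simp [e0]
    have e3 : (starRingEnd ℂ) (f z 1) = (b : ℂ) * (starRingEnd ℂ) z ^ (k + 1) := by simp [e1]
    rw [e2, e3]
    linear_combination (a₁ : ℂ) * (f z 0 - g z 0) * (starRingEnd ℂ) z ^ k * hzz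
  have hval : z * h z / qs z = (((‖q‖ ^ 2)⁻¹ : ℝ) : ℂ) * inner ℂ (f z) (f z - g z) := by
    rw [← hin, hfac' z hzU, hqq]
    have hqc : (starRingEnd ℂ) q ≠ 0 := by simpa using hq0
    have hn : ((‖q‖ ^ 2 : ℝ) : ℂ) = q * (starRingEnd ℂ) q := by
      rw [Complex.mul_conj, Complex.normSq_eq_norm_sq]
    rw [Complex.ofReal_inv, hn]
    have hzc : (starRingEnd ℂ) z = z⁻¹ := eq_inv_of_mul_eq_one_right hzz
    rw [hzc, ← hq, inv_pow]
    field_simp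
    ring
  rw [hval, Complex.re_ofReal_mul]
  refine mul_pos (by positivity) ?_
  have hf1 : ‖f z‖ = 1 := f10_norm_circle k a₁ ha z hz
  have hg1 : ‖g z‖ < 1 := by simpa using hgD z hzU
  rw [inner_sub_right, inner_self_eq_norm_sq_to_K, hf1]
  have h1 : (inner ℂ (f z) (g z)).re ≤ ‖f z‖ * ‖g z‖ := 
    (Complex.re_le_norm _).trans (norm_inner_le_norm _ _)
  rw [hf1] at h1
  simp
  linarith

/-- Schwarz type estimate at second order. -/
lemma schwarz_second {G : EuclideanSpace ℂ (Fin 2) → ℂ}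
    (hG : DifferentiableOn ℂ G (Metric.ball 0 1))
    (hm : ∀ z ∈ Metric.ball (0 : EuclideanSpace ℂ (Fin 2)) 1, ‖G z‖ ≤ 1) (h0 : G 0 = 0) :
    ∃ L : EuclideanSpace ℂ (Fin 2) →L[ℂ] ℂ, ‖L‖ ≤ 1 ∧
      ∀ z ∈ Metric.ball (0 : EuclideanSpace ℂ (Fin 2)) 1, ‖G z - L z‖ ≤ 2 * ‖z‖ ^ 2 := by
  have hL : ‖fderiv ℂ G 0‖ ≤ 1 :=
    Complex.norm_fderiv_le_one_of_mapsTo_ball hG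
      (fun z hz => by simpa [h0] using hm z hz) one_pos
  refine ⟨fderiv ℂ G 0, hL, fun z hz => ?_⟩
  set L := fderiv ℂ G 0 with hLdef
  have hd0 : HasFDerivAt G L 0 :=
    (hG.differentiableAt (Metric.ball_mem_nhds _ one_pos)).hasFDerivAt
  have := Complex.dist_le_mul_div_pow_of_mapsTo_ball_of_isLittleO (f := fun w => G w - L w)
    (c := 0) (R₁ := 1) (R₂ := 2) (n := 1) (hG.sub L.differentiable.differentiableOn) (by
      intro w hw
      have h1 := hm w hw
      have hw' : ‖w‖ < 1 := by simpa using hw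
      have h2 : ‖L w‖ ≤ 1 := (L.le_opNorm w).trans (by nlinarith [norm_nonneg w, norm_nonneg L])
      simp only [h0, map_zero, sub_zero, mem_closedBall, dist_zero_right]
      exact (norm_sub_le _ _).trans (by linarith)) (by
      have := hd0.isLittleO
      simp only [h0, sub_zero] at this
      simp only [h0, map_zero, sub_zero, pow_one]
      exact this.norm_right) hz
  simpa [h0] using this

open Polynomial in
/-- A polynomial that is `O(zⁿ)` at the origin is divisible by `Xⁿ`. -/
lemma X_pow_dvd_of_bound (C : ℝ) (n : ℕ) : ∀ T : ℂ[X],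
    (∀ z : ℂ, ‖z‖ < 1 → ‖T.eval z‖ ≤ C * ‖z‖ ^ n) → X ^ n ∣ T := by
  induction n with
  | zero => intro T _; simp
  | succ n ih =>
    intro T hT
    obtain ⟨S, hS⟩ := ih T (by
      intro z hz
      have hC : 0 ≤ C * ‖z‖ ^ n ∨ C < 0 := by
        rcases lt_or_ge C 0 with h | h
        · exact Or.inr h
        · exact Or.inl (by positivity)
      rcases hC with h | h
      · refine (hT z hz).trans ?_
        rw [pow_succ, ← mul_assoc]
        nlinarith [norm_nonneg z]
      · exfalso
        have := hT (1/2) (by norm_num)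
        have h2 : C * ‖(1/2 : ℂ)‖ ^ (n+1) < 0 := mul_neg_of_neg_of_pos h (pow_pos (by norm_num) _)
        linarith [norm_nonneg (T.eval (1/2))])
    have hS0 : S.eval 0 = 0 := by
      have hbd : ∀ z : ℂ, ‖z‖ < 1 → z ≠ 0 → ‖S.eval z‖ ≤ C * ‖z‖ := by
        intro z hz hz0
        have := hT z hz
        rw [hS, eval_mul, eval_pow, eval_X, norm_mul, norm_pow] at this
        have hp : 0 < ‖z‖ ^ n := by positivity
        rw [pow_succ] at this
        nlinarith
      have t1 : Filter.Tendsto (fun z : ℂ => ‖S.eval z‖) (nhdsWithin 0 {0}ᶜ)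
          (nhds ‖S.eval 0‖) :=
        (S.continuous.norm.tendsto 0).mono_left nhdsWithin_le_nhds
      have t2 : Filter.Tendsto (fun z : ℂ => C * ‖z‖) (nhdsWithin 0 {0}ᶜ) (nhds 0) := by
        have : Filter.Tendsto (fun z : ℂ => C * ‖z‖) (nhds 0) (nhds (C * ‖(0:ℂ)‖)) :=
          (continuous_const.mul continuous_norm).tendsto 0
        simp only [norm_zero, mul_zero] at this
        exact this.mono_left nhdsWithin_le_nhds
      have := le_of_tendsto_of_tendsto t1 t2 (by
        filter_upwards [self_mem_nhdsWithin,
          nhdsWithin_le_nhds (Metric.ball_mem_nhds (0:ℂ) one_pos)] with z hz1 hz2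
        exact hbd z (by simpa using hz2) hz1)
      simpa using this
    have : X ∣ S := by
      rw [X_dvd_iff, coeff_zero_eq_eval_zero]; exact hS0
    obtain ⟨R, hR⟩ := this
    exact ⟨R, by rw [hS, hR, pow_succ, mul_assoc]⟩

lemma circle_infinite : Set.Infinite {z : ℂ | ‖z‖ = 1} := by
  have h : Set.Infinite (Metric.sphere (0 : ℂ) 1) := by
    refine IsPreconnected.infinite_of_nontrivial ?_ ⟨1, by simp, -1, by simp, by norm_num⟩
    exact isPreconnected_sphere (by simp) _ _
  convert h using 1
  ext z; simp

open Polynomial in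
/-- The algebraic core: no admissible polynomials `N`, `M`. -/
lemma poly_core (k j : ℕ) (hj : j ≤ k + 1) (N M : ℂ[X]) (u c0 c1 : ℂ)
    (hu : ‖u‖ = 1) (hc0 : ‖c0‖ < 1) (hc1 : ‖c1‖ < 1)
    (hdeg : N.natDegree ≤ k + 1)
    (hdvd : X ^ (k + 3) ∣ N - M * (C c0 * X ^ k + C c1 * X ^ (k + 1)))
    (hcirc : ∀ z : ℂ, ‖z‖ = 1 → M.eval z = u * z ^ j * (starRingEnd ℂ) (N.eval z)) :
    M = 0 := by
  have hN : X ^ k ∣ N := by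
    have h1 : X ^ k ∣ N - M * (C c0 * X ^ k + C c1 * X ^ (k + 1)) :=
      (pow_dvd_pow _ (by omega)).trans hdvd
    have h2 : X ^ k ∣ M * (C c0 * X ^ k + C c1 * X ^ (k + 1)) :=
      ⟨M * (C c0 + C c1 * X), by ring⟩
    have := dvd_add h1 h2
    simpa using this
  obtain ⟨S, rfl⟩ := hN
  have hS : S.natDegree ≤ 1 := by
    by_cases hS0 : S = 0
    · simp [hS0]
    · rw [natDegree_mul (pow_ne_zero _ X_ne_zero) hS0, natDegree_X_pow] at hdeg
      omega
  obtain ⟨n1, n0, rfl⟩ := exists_eq_X_add_C_of_natDegree_le_one hS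
  set e := k + 1 - j with he
  have hXM : X ^ e * M = C (u * (starRingEnd ℂ) n1) + C (u * (starRingEnd ℂ) n0) * X := by
    refine eq_of_infinite_eval_eq _ _ (circle_infinite.mono ?_)
    intro z hz
    have hz : ‖z‖ = 1 := hz
    have hzz : z * (starRingEnd ℂ) z = 1 := by
      rw [Complex.mul_conj, Complex.normSq_eq_norm_sq, hz]; simp
    have hzk : z ^ k * (starRingEnd ℂ) z ^ k = 1 := by rw [← mul_pow, hzz, one_pow]
    have hze : z ^ e * z ^ j = z ^ (k + 1) := by rw [← pow_add]; congr 1; omega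
    simp only [Set.mem_ofPred_eq, eval_mul, eval_pow, eval_X, eval_add, eval_C, hcirc z hz, map_mul,
      map_add, map_pow]
    calc _ = u * (z ^ e * z ^ j) * ((starRingEnd ℂ) z ^ k *
            ((starRingEnd ℂ) n1 * (starRingEnd ℂ) z + (starRingEnd ℂ) n0)) := by ring
      _ = u * (z ^ k * (starRingEnd ℂ) z ^ k) * ((starRingEnd ℂ) n1 * (z * (starRingEnd ℂ) z)
            + (starRingEnd ℂ) n0 * z) := by rw [hze]; ring
      _ = _ := by rw [hzk, hzz]; ring
  clear_value e
  set m0 := u * (starRingEnd ℂ) n1 with hm0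
  set m1 := u * (starRingEnd ℂ) n0 with hm1
  have hnm0 : ‖m0‖ = ‖n1‖ := by simp [hm0, hu]
  have hnm1 : ‖m1‖ = ‖n0‖ := by simp [hm1, hu]
  suffices hfin : m0 = 0 ∧ m1 = 0 by
    rw [hfin.1, hfin.2] at hXM
    simp only [map_zero, zero_mul, add_zero] at hXM
    exact (mul_eq_zero.1 hXM).resolve_left (pow_ne_zero _ X_ne_zero)
  have hfinish : n0 = 0 → n1 = 0 → m0 = 0 ∧ m1 = 0 := by
    intro h0 h1; simp [hm0, hm1, h0, h1]
  -- the congruence modulo `X ^ 3`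
  have h3 : X ^ 3 ∣ X ^ e * (C n1 * X + C n0) - (C m0 + C m1 * X) * (C c0 + C c1 * X) := by
    obtain ⟨R, hR⟩ := hdvd
    have h4 : (C n1 * X + C n0) - M * (C c0 + C c1 * X) = X ^ 3 * R := by
      apply mul_left_cancel₀ (pow_ne_zero k (X_ne_zero (R := ℂ)))
      linear_combination hR
    exact ⟨X ^ e * R, by rw [← hXM]; linear_combination X ^ e * h4⟩
  rw [X_pow_dvd_iff] at h3
  have hexp : (C m0 + C m1 * X) * (C c0 + C c1 * X) =
      C (m0 * c0) + C (m0 * c1 + m1 * c0) * X + C (m1 * c1) * X ^ 2 := by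
    simp only [map_mul, map_add]; ring
  rw [hexp] at h3
  have z0 := h3 0 (by norm_num)
  have z1 := h3 1 (by norm_num)
  have z2 := h3 2 (by norm_num)
  have small : ∀ x y c : ℂ, ‖c‖ < 1 → ‖x‖ = ‖y‖ → x * c = y → y = 0 := by
    intro x y c hc hxy hm
    have := congrArg norm hm
    rw [norm_mul, hxy] at this
    by_contra hy
    have : 0 < ‖y‖ := norm_pos_iff.2 hy
    nlinarith
  have x0 := congrArg (fun p : ℂ[X] => p.coeff 0) hXM
  have x1 := congrArg (fun p : ℂ[X] => p.coeff 1) hXM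
  rcases Nat.lt_or_ge e 2 with h | h
  · interval_cases e
    · simp [coeff_X, coeff_C, coeff_X_pow, -map_mul, -map_add] at z0 z1 z2
      rcases z2 with z | z
      · -- `m1 = 0`
        have hn0 : n0 = 0 := by rw [← norm_eq_zero, ← hnm1, z, norm_zero]
        refine hfinish hn0 (small m0 n1 c1 hc1 hnm0 ?_)
        rw [z] at z1
        linear_combination -z1
      · -- `c1 = 0`
        rw [z] at z1
        have e0 : m0 * c0 = n0 := by linear_combination -z0
        have e1 : m1 * c0 = n1 := by linear_combination -z1
        have k0 := congrArg norm e0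
        have k1 := congrArg norm e1
        rw [norm_mul, hnm0] at k0
        rw [norm_mul, hnm1] at k1
        have p0 := norm_nonneg n0
        have p1 := norm_nonneg n1
        have pc := norm_nonneg c0
        have q0 : ‖n0‖ = 0 := by
          have : ‖n0‖ * (1 - ‖c0‖ ^ 2) = 0 := by rw [← k1] at k0; linear_combination -k0
          rcases mul_eq_zero.1 this with h | h
          · exact h
          · nlinarith
        have q1 : ‖n1‖ = 0 := by rw [← k1, q0, zero_mul]
        exact hfinish (norm_eq_zero.1 q0) (norm_eq_zero.1 q1)
    · simp [coeff_X, coeff_C] at x0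
      have hn1 : n1 = 0 := by rw [← norm_eq_zero, ← hnm0, ← x0, norm_zero]
      simp [coeff_X, coeff_C, coeff_X_pow, ← x0, -map_mul, -map_add] at z1
      exact hfinish (small m1 n0 c0 hc0 hnm1 (by linear_combination -z1)) hn1
  · obtain ⟨d, rfl⟩ : ∃ d, e = d + 2 := ⟨e - 2, by omega⟩
    have e2 : X ^ (d + 2) * M = (X ^ (d + 1) * M) * X := by ring
    have e3 : X ^ (d + 1) * M = (X ^ d * M) * X := by ring
    rw [e2] at x0 x1
    simp only [coeff_mul_X, coeff_mul_X_zero] at x0 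
    rw [coeff_mul_X, e3, coeff_mul_X_zero] at x1
    simp [coeff_X, coeff_C] at x0 x1
    exact ⟨x0.symm, x1.symm⟩

/-- The Möbius quotient is bounded by one. -/
lemma moebius_bound (p w : ℂ) (hp : ‖p‖ < 1) (hw : ‖w‖ < 1) :
    1 - (starRingEnd ℂ) p * w ≠ 0 ∧ ‖(w - p) / (1 - (starRingEnd ℂ) p * w)‖ ≤ 1 := by
  have hne : 1 - (starRingEnd ℂ) p * w ≠ 0 := by
    intro h0
    have h1 : (starRingEnd ℂ) p * w = 1 := (sub_eq_zero.1 h0).symm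
    have h2 : ‖p‖ * ‖w‖ = 1 := by simpa using congrArg norm h1
    nlinarith [norm_nonneg p, norm_nonneg w]
  refine ⟨hne, ?_⟩
  rw [norm_div, div_le_one (norm_pos_iff.2 hne)]
  refine (sq_le_sq₀ (norm_nonneg _) (norm_nonneg _)).1 ?_
  have key : ‖1 - (starRingEnd ℂ) p * w‖ ^ 2 - ‖w - p‖ ^ 2 =
      (1 - ‖p‖ ^ 2) * (1 - ‖w‖ ^ 2) := by
    simp only [← Complex.normSq_eq_norm_sq, Complex.normSq_apply]
    simp
    ring
  have h1 : ‖p‖ ^ 2 ≤ 1 := pow_le_one₀ (norm_nonneg _) hp.le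
  have h2 : ‖w‖ ^ 2 ≤ 1 := pow_le_one₀ (norm_nonneg _) hw.le
  nlinarith [mul_nonneg (sub_nonneg.2 h1) (sub_nonneg.2 h2)]

open Polynomial in
lemma not_geodesic_core (k : ℕ) (hk : 3 ≤ k) (a₁ : ℝ) (ha : a₁ ∈ Set.Ioo (0 : ℝ) 1)
    (F : EuclideanSpace ℂ (Fin 2) → ℂ) (hF : DifferentiableOn ℂ F (Metric.ball 0 1))
    (hFD : ∀ z ∈ Metric.ball (0 : EuclideanSpace ℂ (Fin 2)) 1, F z ∈ 𝔻)
    (j : ℕ) (hj : j ≤ k + 1) (B : ℂ → ℂ) (hB : IsBlaschke j B)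
    (hFB : ∀ z ∈ 𝔻, F (f10 k a₁ z) = B z) : False := by
  obtain ⟨ω, a, hω, haD, hBa⟩ := hB
  set b : ℝ := Real.sqrt (1 - a₁ ^ 2) with hb
  have hb0 : 0 ≤ b := Real.sqrt_nonneg _
  have hb1 : b < 1 := by
    rw [hb, Real.sqrt_lt' one_pos]
    nlinarith [ha.1]
  have hFn : ∀ z ∈ Metric.ball (0 : EuclideanSpace ℂ (Fin 2)) 1, ‖F z‖ < 1 := fun z hz => by
    simpa [𝔻] using hFD z hz
  have haD' : ∀ i, ‖a i‖ < 1 := fun i => by simpa [𝔻] using haD i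
  set p := F 0 with hp
  have hp1 : ‖p‖ < 1 := hFn 0 (by simp)
  let G : EuclideanSpace ℂ (Fin 2) → ℂ := fun w => (F w - p) / (1 - (starRingEnd ℂ) p * F w)
  have hG : DifferentiableOn ℂ G (Metric.ball 0 1) := by
    have h1 : DifferentiableOn ℂ (fun w => 1 - (starRingEnd ℂ) p * F w) (Metric.ball 0 1) :=
      (hF.const_mul _).const_sub 1
    have h2 := (hF.sub_const p).mul
      (h1.inv (fun z hz => (moebius_bound p (F z) hp1 (hFn z hz)).1))
    refine h2.congr fun z _ => ?_
    simp [G, div_eq_mul_inv]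
  obtain ⟨L, hL, hGL⟩ := schwarz_second hG
    (fun z hz => (moebius_bound p (F z) hp1 (hFn z hz)).2) (by simp [G, ← hp])
  set c0 : ℂ := L (EuclideanSpace.single 0 (a₁ : ℂ)) with hc0
  set c1 : ℂ := L (EuclideanSpace.single 1 (b : ℂ)) with hc1
  have hc0n : ‖c0‖ < 1 := by
    have := L.le_opNorm (EuclideanSpace.single 0 (a₁ : ℂ))
    rw [← hc0, EuclideanSpace.norm_single, Complex.norm_real, Real.norm_eq_abs,
      abs_of_pos ha.1] at this
    nlinarith [ha.1, ha.2, norm_nonneg L]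
  have hc1n : ‖c1‖ < 1 := by
    have := L.le_opNorm (EuclideanSpace.single 1 (b : ℂ))
    rw [← hc1, EuclideanSpace.norm_single, Complex.norm_real, Real.norm_eq_abs,
      abs_of_nonneg hb0] at this
    nlinarith [norm_nonneg L]
  have hLf : ∀ z, L (f10 k a₁ z) = c0 * z ^ k + c1 * z ^ (k + 1) := by
    intro z
    have e : f10 k a₁ z = z ^ k • EuclideanSpace.single 0 (a₁ : ℂ) +
        z ^ (k + 1) • EuclideanSpace.single 1 (b : ℂ) := by
      ext i
      fin_cases i <;> simp [f10, mul_comm, hb]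
    rw [e, map_add, map_smul, map_smul, ← hc0, ← hc1, smul_eq_mul, smul_eq_mul]
    ring
  let P : ℂ[X] := ∏ i, (C (a i) - X)
  let Q : ℂ[X] := ∏ i, (1 - C ((starRingEnd ℂ) (a i)) * X)
  have hPe : ∀ z, P.eval z = ∏ i, (a i - z) := by intro z; simp [P, eval_prod]
  have hQe : ∀ z, Q.eval z = ∏ i, (1 - (starRingEnd ℂ) (a i) * z) := by
    intro z; simp [Q, eval_prod]
  have hPd : P.natDegree ≤ j := by
    refine (natDegree_prod_le _ _).trans ?_
    refine (Finset.sum_le_card_nsmul _ _ 1 fun i _ => ?_).trans (by simp)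
    compute_degree
  have hQd : Q.natDegree ≤ j := by
    refine (natDegree_prod_le _ _).trans ?_
    refine (Finset.sum_le_card_nsmul _ _ 1 fun i _ => ?_).trans (by simp)
    compute_degree
  let N : ℂ[X] := C ω * P - C p * Q
  let M : ℂ[X] := Q - C ((starRingEnd ℂ) p * ω) * P
  have hNd : N.natDegree ≤ k + 1 :=
    (natDegree_sub_le_of_le ((natDegree_C_mul_le _ _).trans hPd)
      ((natDegree_C_mul_le _ _).trans hQd)).trans (by simpa using hj)
  have hNe : ∀ z, N.eval z = ω * P.eval z - p * Q.eval z := by intro z; simp [N]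
  have hMe : ∀ z, M.eval z = Q.eval z - (starRingEnd ℂ) p * ω * P.eval z := by
    intro z; simp [M]
  have hQ0 : ∀ z : ℂ, ‖z‖ < 1 → Q.eval z ≠ 0 := by
    intro z hz
    rw [hQe]
    refine Finset.prod_ne_zero_iff.2 fun i _ h0 => ?_
    have h1 : (starRingEnd ℂ) (a i) * z = 1 := (sub_eq_zero.1 h0).symm
    have h2 : ‖a i‖ * ‖z‖ = 1 := by simpa using congrArg norm h1
    nlinarith [haD' i, norm_nonneg z, norm_nonneg (a i)]
  have hBQ : ∀ z : ℂ, ‖z‖ < 1 → F (f10 k a₁ z) * Q.eval z = ω * P.eval z := by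
    intro z hz
    have hzD : z ∈ 𝔻 := by simpa [𝔻] using hz
    rw [hFB z hzD, hBa z hzD, Finset.prod_div_distrib, ← hPe, ← hQe]
    have := hQ0 z hz
    field_simp
  have hNM : ∀ z : ℂ, ‖z‖ < 1 → N.eval z = M.eval z * G (f10 k a₁ z) := by
    intro z hz
    have hzD : z ∈ 𝔻 := by simpa [𝔻] using hz
    have hne := (moebius_bound p _ hp1 (hFn _ (f10_mem k hk a₁ ha z hzD))).1
    have e1 : N.eval z = Q.eval z * (F (f10 k a₁ z) - p) := by
      rw [hNe, ← hBQ z hz]; ring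
    have e2 : M.eval z = Q.eval z * (1 - (starRingEnd ℂ) p * F (f10 k a₁ z)) := by
      rw [hMe]; linear_combination (-(starRingEnd ℂ) p) * (-hBQ z hz)
    rw [e1, e2]
    simp only [G]
    rw [mul_assoc, mul_div_cancel₀ _ hne]
  obtain ⟨K, hK⟩ := (isCompact_closedBall (0 : ℂ) 1).exists_bound_of_continuousOn
    (f := fun z => M.eval z) M.continuous.continuousOn
  have hdvd : X ^ (k + 3) ∣ N - M * (C c0 * X ^ k + C c1 * X ^ (k + 1)) := by
    refine X_pow_dvd_of_bound (K * 2) _ _ ?_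
    intro z hz
    have hzD : z ∈ 𝔻 := by simpa [𝔻] using hz
    have h1 := hGL _ (f10_mem k hk a₁ ha z hzD)
    rw [hLf] at h1
    have e : (N - M * (C c0 * X ^ k + C c1 * X ^ (k + 1))).eval z =
        M.eval z * (G (f10 k a₁ z) - (c0 * z ^ k + c1 * z ^ (k + 1))) := by
      simp only [eval_sub, eval_mul, eval_add, eval_C, eval_pow, eval_X]
      rw [hNM z hz]; ring
    rw [e, norm_mul, mul_assoc]
    have hKz := hK z (by simpa using hz.le)
    have h2 : ‖f10 k a₁ z‖ ^ 2 ≤ ‖z‖ ^ (k + 3) := by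
      calc ‖f10 k a₁ z‖ ^ 2 ≤ (‖z‖ ^ k) ^ 2 :=
            pow_le_pow_left₀ (norm_nonneg _) (f10_norm_le k a₁ ha z hz.le) 2
        _ = ‖z‖ ^ (k * 2) := by rw [← pow_mul]
        _ ≤ _ := pow_le_pow_of_le_one (norm_nonneg _) hz.le (by omega)
    exact mul_le_mul hKz (h1.trans (by linarith)) (norm_nonneg _) ((norm_nonneg _).trans hKz)
  have hM0 : M = 0 := by
    refine poly_core k j hj N M (ω * (-1) ^ j) c0 c1 (by simp [hω]) hc0n hc1n hNd hdvd ?_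
    intro z hz
    have hzz : z * (starRingEnd ℂ) z = 1 := by
      rw [Complex.mul_conj, Complex.normSq_eq_norm_sq, hz]; simp
    have hww : ω * (starRingEnd ℂ) ω = 1 := by
      rw [Complex.mul_conj, Complex.normSq_eq_norm_sq, hω]; simp
    have hPc : z ^ j * (starRingEnd ℂ) (P.eval z) = (-1) ^ j * Q.eval z := by
      have hpt : ∀ i, z * (starRingEnd ℂ) (a i - z) =
          (-1) * (1 - (starRingEnd ℂ) (a i) * z) := by
        intro i; rw [map_sub, mul_sub, hzz]; ring
      have := Finset.prod_congr (rfl : (Finset.univ : Finset (Fin j)) = Finset.univ)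
        (fun i _ => hpt i)
      rw [Finset.prod_mul_distrib, Finset.prod_mul_distrib] at this
      rw [hPe, hQe, map_prod]
      simpa using this
    have hQc : z ^ j * (starRingEnd ℂ) (Q.eval z) = (-1) ^ j * P.eval z := by
      have hpt : ∀ i, z * (starRingEnd ℂ) (1 - (starRingEnd ℂ) (a i) * z) =
          (-1) * (a i - z) := by
        intro i
        rw [map_sub, map_mul, map_one, Complex.conj_conj]
        linear_combination (-a i) * hzz
      have := Finset.prod_congr (rfl : (Finset.univ : Finset (Fin j)) = Finset.univ)
        (fun i _ => hpt i)
      rw [Finset.prod_mul_distrib, Finset.prod_mul_distrib] at this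
      rw [hPe, hQe, map_prod]
      simpa using this
    have hs : ((-1 : ℂ) ^ j) * (-1) ^ j = 1 := by rw [← mul_pow]; simp
    rw [hMe, hNe, map_sub, map_mul, map_mul]
    calc _ = (ω * (starRingEnd ℂ) ω) * (((-1 : ℂ) ^ j) * (-1) ^ j) * Q.eval z -
          (((-1 : ℂ) ^ j) * (-1) ^ j) * ((starRingEnd ℂ) p * ω * P.eval z) := by
            rw [hww, hs]; ring
      _ = ω * (-1) ^ j * ((starRingEnd ℂ) ω * ((-1) ^ j * Q.eval z) -
          (starRingEnd ℂ) p * ((-1) ^ j * P.eval z)) := by ring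
      _ = _ := by rw [← hPc, ← hQc]; ring
  have hf0 : f10 k a₁ 0 = 0 := by
    have := f10_norm_le k a₁ ha 0 (by simp)
    rw [norm_zero, zero_pow (by omega)] at this
    exact norm_le_zero_iff.1 this
  have h1 := hBQ 0 (by simp)
  have h2 : M.eval 0 = 0 := by rw [hM0]; simp
  have hQ1 : Q.eval 0 = 1 := by rw [hQe]; simp
  rw [hf0, hQ1, mul_one, ← hp] at h1
  rw [hMe, hQ1, mul_assoc, ← h1] at h2
  exact (moebius_bound p p hp1 hp1).1 h2

theorem stmt10 (k : ℕ) (hk : 3 ≤ k) (a₁ : ℝ) (ha : a₁ ∈ Set.Ioo (0 : ℝ) 1) :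
    (¬ ∃ F : EuclideanSpace ℂ (Fin 2) → ℂ,
        DifferentiableOn ℂ F (Metric.ball 0 1) ∧
        (∀ z ∈ Metric.ball (0 : EuclideanSpace ℂ (Fin 2)) 1, F z ∈ 𝔻) ∧ F 0 = 0 ∧
        ∃ j : ℕ, 1 ≤ j ∧ j ≤ k + 1 ∧ ∃ B : ℂ → ℂ, IsBlaschke j B ∧
          ∀ z ∈ 𝔻, F (f10 k a₁ z) = B z) ∧
    IsMExtremal (Metric.ball (0 : EuclideanSpace ℂ (Fin 2)) 1) (k + 2) (f10 k a₁) ∧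
    ¬ IsComplexGeodesicOfOrder (Metric.ball (0 : EuclideanSpace ℂ (Fin 2)) 1) (k + 2)
        (f10 k a₁) := by
  have hgeo : ¬ IsComplexGeodesicOfOrder (Metric.ball (0 : EuclideanSpace ℂ (Fin 2)) 1) (k + 2)
      (f10 k a₁) := by
    rintro ⟨-, -, F, hF, hFD, j, -, hj, B, hB, hFB⟩
    exact not_geodesic_core k hk a₁ ha F hF hFD j (by omega) B hB hFB
  refine ⟨?_, ⟨(f10_diff k a₁).differentiableOn, f10_mem k hk a₁ ha, ?_⟩, hgeo⟩
  · rintro ⟨F, hF, hFD, -, j, -, hj, B, hB, hFB⟩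
    exact not_geodesic_core k hk a₁ ha F hF hFD j hj B hB hFB
  · intro lam hinj hlam
    exact f10_extSolv k a₁ ha lam hinj hlam

end
end

section
/- Let f : 𝔻 → ℛ_{II} be a complex geodesic of the Cartan domain ℛ_{II} of symmetric 2×2 matrices with f(0) = 0. Then there exist a unitary 2×2 matrix U and a holomorphic function Z : 𝔻 → 𝔻 with Z(0) = 0 such that f(λ) = U·diag(λ, Z(λ))·Uᵗ for all λ ∈ 𝔻. -/
open Complex Metric Set

noncomputable section

variable {E : Type*} [NormedAddCommGroup E] [NormedSpace ℂ E]

attribute [local instance] Matrix.normedAddCommGroup Matrix.normedSpace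

/-- The Cartan domain of the second type: symmetric `2 × 2` complex matrices of
operator norm less than `1`. -/
def RII : Set (Matrix (Fin 2) (Fin 2) ℂ) :=
  {z | z.IsSymm ∧ ‖Matrix.toEuclideanCLM (𝕜 := ℂ) z‖ < 1}

/-- The map `π : z ↦ (z₁₁, z₂₂, det z)`. -/
def tetraPi (z : Matrix (Fin 2) (Fin 2) ℂ) : Fin 3 → ℂ := ![z 0 0, z 1 1, z.det]

/-- The tetrablock. -/
def TetE : Set (Fin 3 → ℂ) :=
  {x | ‖x 0 - (starRingEnd ℂ) (x 1) * x 2‖ + ‖x 1 - (starRingEnd ℂ) (x 0) * x 2‖ + ‖x 2‖ ^ 2 < 1}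

/-- The royal variety of the tetrablock. -/
def RoyalT : Set (Fin 3 → ℂ) := {x | x 0 ∈ 𝔻 ∧ x 1 ∈ 𝔻 ∧ x 2 ∈ 𝔻 ∧ x 0 * x 1 = x 2}

/-- The Euclidean operator attached to a matrix. -/
abbrev opT (A : Matrix (Fin 2) (Fin 2) ℂ) :
    EuclideanSpace ℂ (Fin 2) →L[ℂ] EuclideanSpace ℂ (Fin 2) :=
  Matrix.toEuclideanCLM (𝕜 := ℂ) A

lemma exists_max_vec (T : EuclideanSpace ℂ (Fin 2) →L[ℂ] EuclideanSpace ℂ (Fin 2)) :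
    ∃ x, ‖x‖ = 1 ∧ ‖T x‖ = ‖T‖ := by
  have hne : (Metric.sphere (0 : EuclideanSpace ℂ (Fin 2)) 1).Nonempty :=
    NormedSpace.sphere_nonempty.mpr zero_le_one
  obtain ⟨x, hx, hmax⟩ := (isCompact_sphere (0 : EuclideanSpace ℂ (Fin 2)) 1).exists_isMaxOn hne
    (f := fun x => ‖T x‖) (by fun_prop)
  have hx1 : ‖x‖ = 1 := by simpa using hx
  refine ⟨x, hx1, le_antisymm ?_ ?_⟩
  · simpa [hx1] using T.le_opNorm x
  · refine T.opNorm_le_bound (norm_nonneg _) fun y => ?_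
    by_cases hy : y = 0
    · simp [hy]
    have hy' : ‖y‖ ≠ 0 := norm_ne_zero_iff.mpr hy
    have h1 : ((‖y‖ : ℂ)⁻¹ • y) ∈ Metric.sphere (0 : EuclideanSpace ℂ (Fin 2)) 1 := by
      simp [norm_smul, hy']
    have h2 : ‖T ((‖y‖ : ℂ)⁻¹ • y)‖ ≤ ‖T x‖ := hmax h1
    rw [map_smul, norm_smul, norm_inv, Complex.norm_real, norm_norm,
      inv_mul_le_iff₀ (by positivity)] at h2
    linarith

lemma adjoint_max (T : EuclideanSpace ℂ (Fin 2) →L[ℂ] EuclideanSpace ℂ (Fin 2))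
    (x : EuclideanSpace ℂ (Fin 2)) (hx : ‖x‖ = 1) (h : ‖T x‖ = ‖T‖) :
    (star T) (T x) = ((‖T‖ : ℂ) ^ 2) • x := by
  rw [← sub_eq_zero, ← norm_eq_zero, ← sq_eq_zero_iff]
  refine le_antisymm ?_ (sq_nonneg _)
  have h1 : ‖(star T) (T x)‖ ≤ ‖T‖ * ‖T‖ := by
    have := (star T).le_opNorm (T x)
    rw [h] at this
    exact this.trans_eq (congrArg (· * ‖T‖) (norm_star T))
  rw [@norm_sub_sq ℂ, inner_smul_right, ContinuousLinearMap.star_eq_adjoint,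
    ContinuousLinearMap.adjoint_inner_left, inner_self_eq_norm_sq_to_K, h, norm_smul, hx]
  rw [ContinuousLinearMap.star_eq_adjoint] at h1
  have h2 : RCLike.re ((‖T‖ : ℂ) ^ 2 * ((‖T‖ : ℝ) : ℂ) ^ 2) = ‖T‖ ^ 4 := by
    rw [← Complex.ofReal_pow, ← Complex.ofReal_mul]
    change (((‖T‖ ^ 2 * ‖T‖ ^ 2 : ℝ)) : ℂ).re = _
    rw [Complex.ofReal_re]; ring
  have h3 : ‖((‖T‖ : ℂ) ^ 2)‖ = ‖T‖ ^ 2 := by simp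
  erw [h2]
  rw [h3]
  have : ‖(ContinuousLinearMap.adjoint T) (T x)‖ ^ 2 ≤ (‖T‖ * ‖T‖) ^ 2 := by gcongr
  nlinarith

open Matrix in
lemma takagi_vec (A : Matrix (Fin 2) (Fin 2) ℂ) (hA : A.IsSymm) :
    ∃ u : Fin 2 → ℂ, u ≠ 0 ∧ A *ᵥ star u = (‖opT A‖ : ℂ) • u := by
  obtain ⟨x, hx, hTx⟩ := exists_max_vec (opT A)
  have h := adjoint_max (opT A) x hx hTx
  set s : ℂ := (‖opT A‖ : ℂ) with hs
  have hsr : star s = s := by simp [hs]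
  have h' : Aᴴ *ᵥ (A *ᵥ x.ofLp) = s ^ 2 • x.ofLp := by
    have h2 : star (opT A) = opT Aᴴ := by
      rw [← Matrix.star_eq_conjTranspose]; exact (map_star _ _).symm
    rw [h2] at h
    have := congrArg WithLp.ofLp h
    simpa using this
  set y : Fin 2 → ℂ := x.ofLp with hy
  have hy0 : y ≠ 0 := by
    intro h0
    have : x = 0 := by ext i; simpa using congrFun h0 i
    simp [this] at hx
  have hw : A *ᵥ star (A *ᵥ y) = s ^ 2 • star y := by
    have : star (Aᴴ *ᵥ (A *ᵥ y)) = star (s ^ 2 • y) := by rw [h']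
    rw [Matrix.star_mulVec, Matrix.conjTranspose_conjTranspose, ← Matrix.mulVec_transpose, hA.eq, star_smul, star_pow, hsr] at this
    exact this
  by_cases hu : A *ᵥ y + s • star y = 0
  · refine ⟨Complex.I • star y, by simp [hy0], ?_⟩
    have : A *ᵥ y = - (s • star y) := eq_neg_of_add_eq_zero_left hu
    rw [star_smul, star_star, Matrix.mulVec_smul, this]
    ext i; simp; ring
  · refine ⟨_, hu, ?_⟩
    rw [star_add, star_smul, star_star, Matrix.mulVec_add, Matrix.mulVec_smul, hw, hsr, smul_add, smul_smul,
      add_comm, sq]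

open Matrix in
lemma takagi_unitary (A : Matrix (Fin 2) (Fin 2) ℂ) (hA : A.IsSymm) :
    ∃ W ∈ Matrix.unitaryGroup (Fin 2) ℂ, (W * A * Wᵀ) 0 0 = (‖opT A‖ : ℂ) := by
  obtain ⟨u, hu, h⟩ := takagi_vec A hA
  set s : ℂ := (‖opT A‖ : ℂ) with hs
  have hpos : 0 < ‖u 0‖ ^ 2 + ‖u 1‖ ^ 2 := by
    by_contra hc
    apply hu
    have h0 : ‖u 0‖ ^ 2 = 0 := by nlinarith [sq_nonneg ‖u 0‖, sq_nonneg ‖u 1‖]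
    have h1 : ‖u 1‖ ^ 2 = 0 := by nlinarith [sq_nonneg ‖u 0‖, sq_nonneg ‖u 1‖]
    ext i; fin_cases i
    · simpa using h0
    · simpa using h1
  set r : ℝ := Real.sqrt (‖u 0‖ ^ 2 + ‖u 1‖ ^ 2) with hr
  have hr0 : (r : ℂ) ≠ 0 := by
    have : 0 < r := Real.sqrt_pos.mpr hpos
    exact_mod_cast this.ne'
  have hr2 : (r : ℂ) ^ 2 = star (u 0) * u 0 + star (u 1) * u 1 := by
    have : r ^ 2 = ‖u 0‖ ^ 2 + ‖u 1‖ ^ 2 := Real.sq_sqrt hpos.le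
    have := congrArg (fun t : ℝ => (t : ℂ)) this
    push_cast at this
    rw [this, ← Complex.conj_mul', ← Complex.conj_mul']
    rfl
  have e0 := congrFun h 0
  have e1 := congrFun h 1
  simp [Matrix.mulVec, dotProduct, Fin.sum_univ_two] at e0 e1 hr2
  refine ⟨!![star (u 0) / r, star (u 1) / r; - u 1 / r, u 0 / r], ?_, ?_⟩
  · rw [Matrix.mem_unitaryGroup_iff]
    ext i j
    fin_cases i <;> fin_cases j <;>
      simp [Matrix.mul_apply, Fin.sum_univ_two, Matrix.star_apply] <;> field_simp <;>
      first | ring1 | linear_combination -hr2 | linear_combination hr2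
  · have key : ∀ W : Matrix (Fin 2) (Fin 2) ℂ, (W * A * Wᵀ) 0 0 =
        (W 0 0 * A 0 0 + W 0 1 * A 1 0) * W 0 0 + (W 0 0 * A 0 1 + W 0 1 * A 1 1) * W 0 1 := by
      intro W
      simp [Matrix.mul_apply, Fin.sum_univ_two]
    rw [key]
    simp
    field_simp
    linear_combination (starRingEnd ℂ) (u 0) * e0 + (starRingEnd ℂ) (u 1) * e1 - s * hr2

lemma opT_mul (A B : Matrix (Fin 2) (Fin 2) ℂ) : opT (A * B) = opT A * opT B := map_mul _ _ _

lemma opT_unitary_norm (W : Matrix (Fin 2) (Fin 2) ℂ) (hW : W ∈ Matrix.unitaryGroup (Fin 2) ℂ) :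
    ‖opT W‖ ≤ 1 := by
  apply le_of_eq
  apply CStarRing.norm_of_mem_unitary
  exact Unitary.map_mem (Matrix.toEuclideanCLM (n := Fin 2) (𝕜 := ℂ)) hW

open Matrix in
lemma opT_conj_norm (W A : Matrix (Fin 2) (Fin 2) ℂ) (hW : W ∈ Matrix.unitaryGroup (Fin 2) ℂ) :
    ‖opT (W * A * Wᵀ)‖ ≤ ‖opT A‖ := by
  have hW' : Wᵀ ∈ Matrix.unitaryGroup (Fin 2) ℂ := by
    rw [Matrix.mem_unitaryGroup_iff']
    have h := Matrix.mem_unitaryGroup_iff.mp hW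
    have h' : star Wᵀ = (star W)ᵀ := rfl
    rw [h', ← Matrix.transpose_mul, h, Matrix.transpose_one]
  have h1 := opT_unitary_norm W hW
  have h2 := opT_unitary_norm _ hW'
  rw [opT_mul, opT_mul]
  calc _ ≤ ‖opT W‖ * ‖opT A‖ * ‖opT Wᵀ‖ := by
        refine (norm_mul_le _ _).trans ?_
        gcongr
        exact norm_mul_le _ _
    _ ≤ 1 * ‖opT A‖ * 1 := by gcongr
    _ = _ := by ring

lemma opT_col (A : Matrix (Fin 2) (Fin 2) ℂ) (j : Fin 2) :
    ‖A 0 j‖ ^ 2 + ‖A 1 j‖ ^ 2 ≤ ‖opT A‖ ^ 2 := by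
  have := (opT A).le_opNorm (WithLp.toLp 2 (Pi.single j 1))
  have h1 : ‖(WithLp.toLp 2 (Pi.single j 1) : EuclideanSpace ℂ (Fin 2))‖ = 1 := by simp
  rw [h1, mul_one] at this
  have h2 := pow_le_pow_left₀ (norm_nonneg _) this 2
  rw [EuclideanSpace.norm_sq_eq] at h2
  simpa [Fin.sum_univ_two] using h2

lemma f_norm_le (f : ℂ → Matrix (Fin 2) (Fin 2) ℂ)
    (hf : DifferentiableOn ℂ f 𝔻) (hfR : ∀ z ∈ 𝔻, f z ∈ RII) (hf0 : f 0 = 0) (z : ℂ) (hz : z ∈ 𝔻) :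
    ‖opT (f z)‖ ≤ ‖z‖ := by
  let L : Matrix (Fin 2) (Fin 2) ℂ →L[ℂ] (EuclideanSpace ℂ (Fin 2) →L[ℂ] EuclideanSpace ℂ (Fin 2)) :=
    LinearMap.toContinuousLinearMap
      ((Matrix.toEuclideanCLM (n := Fin 2) (𝕜 := ℂ)).toAlgEquiv.toLinearMap)
  have hL : ∀ A, L A = opT A := fun A => rfl
  have := Complex.norm_le_norm_of_mapsTo_ball (f := fun w => L (f w)) (R := 1) (z := z)
    (L.differentiable.comp_differentiableOn hf) ?_ (by simp [hf0]) (by simpa [𝔻] using hz)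
  · simpa [hL] using this
  · intro w hw
    have := (hfR w hw).2
    simpa [hL] using this.le

lemma f_norm_ge (f : ℂ → Matrix (Fin 2) (Fin 2) ℂ)
    (hfR : ∀ z ∈ 𝔻, f z ∈ RII) (hf0 : f 0 = 0)
    (F : Matrix (Fin 2) (Fin 2) ℂ → ℂ)
    (hF : DifferentiableOn ℂ F RII) (hFD : ∀ z ∈ RII, F z ∈ 𝔻)
    (hleft : ∀ z ∈ 𝔻, F (f z) = z) (z : ℂ) (hz : z ∈ 𝔻) :
    ‖z‖ ≤ ‖opT (f z)‖ := by
  have h00 : (0 : ℂ) ∈ 𝔻 := by simp [𝔻]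
  have hF0 : F 0 = 0 := by rw [← hf0]; exact hleft 0 h00
  set s := ‖opT (f z)‖ with hs
  by_cases hs0 : s = 0
  · have : opT (f z) = 0 := norm_eq_zero.mp hs0
    have : f z = 0 := (map_eq_zero_iff _ (Matrix.toEuclideanCLM (n := Fin 2) (𝕜 := ℂ)).injective).mp this
    have h := hleft z hz
    rw [this, hF0] at h
    simp [← h, hs0]
  have hspos : 0 < s := lt_of_le_of_ne (norm_nonneg _) (Ne.symm hs0)
  have hs1 : s < 1 := (hfR z hz).2
  have hmaps : ∀ w ∈ ball (0 : ℂ) 1, (w * (s : ℂ)⁻¹) • f z ∈ RII := by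
    intro w hw
    refine ⟨(hfR z hz).1.smul _, ?_⟩
    rw [map_smul, norm_smul, norm_mul, norm_inv, Complex.norm_real, Real.norm_of_nonneg hspos.le]
    change ‖w‖ * s⁻¹ * s < 1
    rw [mul_assoc, inv_mul_cancel₀ hs0, mul_one]
    simpa using hw
  have hG : DifferentiableOn ℂ (fun w : ℂ => F ((w * (s : ℂ)⁻¹) • f z)) (ball 0 1) := by
    refine hF.comp (g := F) (f := fun w : ℂ => (w * (s : ℂ)⁻¹) • f z) ?_ hmaps
    exact (Differentiable.smul_const (by fun_prop) _).differentiableOn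
  have hsc : (s : ℂ) ≠ 0 := by exact_mod_cast hs0
  have := Complex.norm_le_norm_of_mapsTo_ball (R := 1) (z := (s : ℂ)) hG
    (fun w hw => ball_subset_closedBall (hFD _ (hmaps w hw))) (by simp [hF0])
    (by simpa [abs_of_pos hspos] using hs1)
  simpa [hsc, hleft z hz, abs_of_pos hspos] using this

theorem stmt15 (f : ℂ → Matrix (Fin 2) (Fin 2) ℂ)
    (hf : DifferentiableOn ℂ f 𝔻) (hfR : ∀ z ∈ 𝔻, f z ∈ RII) (hf0 : f 0 = 0)
    (F : Matrix (Fin 2) (Fin 2) ℂ → ℂ)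
    (hF : DifferentiableOn ℂ F RII) (hFD : ∀ z ∈ RII, F z ∈ 𝔻)
    (hleft : ∀ z ∈ 𝔻, F (f z) = z) :
    ∃ U : Matrix (Fin 2) (Fin 2) ℂ, U ∈ Matrix.unitaryGroup (Fin 2) ℂ ∧
      ∃ Z : ℂ → ℂ, DifferentiableOn ℂ Z 𝔻 ∧ (∀ z ∈ 𝔻, Z z ∈ 𝔻) ∧ Z 0 = 0 ∧
        ∀ z ∈ 𝔻, f z = U * !![z, 0; 0, Z z] * U.transpose := by
  have hhalf : (1 / 2 : ℂ) ∈ 𝔻 := by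
    simp [𝔻]; norm_num
  have hn : ‖opT (f (1 / 2))‖ = 1 / 2 := by
    have e : ‖(1 / 2 : ℂ)‖ = 1 / 2 := by simp
    rw [← e]
    exact le_antisymm (f_norm_le f hf hfR hf0 _ hhalf)
      (f_norm_ge f hfR hf0 F hF hFD hleft _ hhalf)
  obtain ⟨W, hW, hW0⟩ := takagi_unitary (f (1 / 2)) (hfR _ hhalf).1
  rw [hn] at hW0
  let g : ℂ → Matrix (Fin 2) (Fin 2) ℂ := fun z => W * f z * W.transpose
  have hgn : ∀ z ∈ 𝔻, ‖opT (g z)‖ ≤ ‖z‖ := fun z hz =>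
    (opT_conj_norm W _ hW).trans (f_norm_le f hf hfR hf0 z hz)
  have hgd : ∀ i j, DifferentiableOn ℂ (fun z => g z i j) 𝔻 := by
    intro i j
    have hfe : ∀ k l, DifferentiableOn ℂ (fun z => f z k l) 𝔻 := fun k l =>
      differentiableOn_pi.mp (differentiableOn_pi.mp hf k) l
    have e : (fun z => g z i j) = fun z => (W i 0 * f z 0 0 + W i 1 * f z 1 0) * W j 0
        + (W i 0 * f z 0 1 + W i 1 * f z 1 1) * W j 1 := by
      funext z
      simp [g, Matrix.mul_apply, Fin.sum_univ_two]
    rw [e]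
    have h1 := hfe 0 0
    have h2 := hfe 0 1
    have h3 := hfe 1 0
    have h4 := hfe 1 1
    fun_prop
  have hg0 : g 0 = 0 := by simp [g, hf0]
  have hgsymm : ∀ z ∈ 𝔻, g z 0 1 = g z 1 0 := by
    intro z hz
    have h := (hfR z hz).1
    have : (g z).transpose = g z := by
      simp only [g, Matrix.transpose_mul, Matrix.transpose_transpose]
      rw [h.eq, Matrix.mul_assoc]
    exact congrFun (congrFun this 1) 0
  have hz1 : ∀ z ∈ 𝔻, ‖z‖ < 1 := fun z hz => by simpa [𝔻] using hz
  have hent : ∀ i, ∀ z ∈ 𝔻, ‖g z i i‖ ≤ ‖z‖ := by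
    intro i z hz
    have h1 := opT_col (g z) i
    have h2 := hgn z hz
    refine abs_le_of_sq_le_sq' ?_ (norm_nonneg _) |>.2
    have h3 : ‖opT (g z)‖ ^ 2 ≤ ‖z‖ ^ 2 := by gcongr
    fin_cases i
    · simp at h1 ⊢; nlinarith [sq_nonneg ‖g z 1 0‖]
    · simp at h1 ⊢; nlinarith [sq_nonneg ‖g z 0 1‖]
  have h11 : ∀ z ∈ 𝔻, g z 0 0 = z := by
    have hds : dslope (fun z => g z 0 0) 0 (1 / 2) = 1 := by
      rw [dslope_of_ne _ (by norm_num), slope_def_field]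
      have : g (1 / 2) 0 0 = ((1 / 2 : ℝ) : ℂ) := hW0
      simp only [this, hg0]
      simp
    have := Complex.affine_of_mapsTo_ball_of_norm_dslope_eq_div (f := fun z => g z 0 0) (c := 0)
      (R₁ := 1) (R₂ := 1) (z₀ := 1 / 2) (hgd 0 0) ?_ hhalf (by rw [hds]; simp)
    · intro z hz
      have h := this hz
      simp only [hds] at h
      simpa [hg0] using h
    · intro w hw
      have := (hent 0 w hw).trans (hz1 w hw).le
      simpa [hg0] using this
  have h10 : ∀ z ∈ 𝔻, g z 1 0 = 0 := by
    intro z hz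
    have h1 := opT_col (g z) 0
    have h3 : ‖opT (g z)‖ ^ 2 ≤ ‖z‖ ^ 2 := by
      have := hgn z hz
      gcongr
    rw [h11 z hz] at h1
    have : ‖g z 1 0‖ ^ 2 = 0 := le_antisymm (by linarith) (sq_nonneg _)
    simpa using this
  have hWW : star W * W = 1 := Matrix.mem_unitaryGroup_iff'.mp hW
  refine ⟨star W, ?_, fun z => g z 1 1, hgd 1 1, ?_, by simp [hg0], ?_⟩
  · exact Unitary.star_mem hW
  · intro z hz
    have := (hent 1 z hz).trans_lt (hz1 z hz)
    simpa [𝔻] using this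
  · intro z hz
    have hgz : !![z, 0; 0, g z 1 1] = g z := by
      ext i j
      fin_cases i <;> fin_cases j <;> simp [h11 z hz, h10 z hz, hgsymm z hz]
    rw [hgz]
    have hT : W.transpose * (star W).transpose = 1 := by
      rw [← Matrix.transpose_mul, hWW, Matrix.transpose_one]
    calc f z = (star W * W) * f z * (W.transpose * (star W).transpose) := by
          rw [hWW, hT, one_mul, mul_one]
      _ = _ := by simp only [g, Matrix.mul_assoc]

end
end
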